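/- arXiv:1801.08778 — 4 statements merged into one kernel-verified Lean document; each statement's English description precedes it below -/
import Mathlib

section
/- Let k ≥ 1 with n_k > 2. Then for every L with |p_{k−1}| + 2 ≤ L ≤ |p_k| + 1, the complexity is C(L) = (|p_{k−1}| + 1) + (#A_k − 1)·L + T(L), where T(L) = 𝟙_{A_k}(a_{k−1})·(L − 2|p_{k−1}| + |p_{k−2}| − 1) if |p_{k−1}| + 2 ≤ L ≤ 2|p_{k−1}| − |p_{k−2}| + 1; T(L) = 0 if 2|p_{k−1}| − |p_{k−2}| + 2 ≤ L ≤ |p_k| − |p_{k−1}|; and T(L) = −𝟙[a_k ∉ A_{k+1}]·(L − |p_k| + |p_{k−1}|) if |p_k| − |p_{k−1}| + 1 ≤ L ≤ |p_k| + 1 (the arithmetic being carried out in ℤ). -/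
/-!
Put `Q i = n 0 ⋯ n (i-1)`, so that `|p (k-1)| + 1 = Q k`. The blocks are prefixes of one sequence
indexed by `y ≥ 1`, whose letter at `y` is `a i` for the largest `i` with `Q i ∣ y` (`limSeq`,
`block_eq`), and the language consists of the windows of this sequence (`mem_lang_iff`).

Write `k = K + 1`, `q = Q k`, and call the multiples of `q` holes. A window of length
`L ≤ Q (k+1)` meets at most one multiple of `Q (k+1)`, and every hole that is not such a multiple
carries `a k`. Hence the words of length `L` are
* the words of the `q`-periodic sequence `p (k-1) a k p (k-1) a k ⋯` (`perWord`), all `q` phases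
  if `a k` recurs later, and otherwise only those phases for which the window has fewer than
  `n k` holes;
* the words obtained from it by changing one hole, at a position `j < L`, into a letter
  `b ∈ A_k` with `b ≠ a k` (`modWord`); the position `j` determines the phase.

Up to coincidences this gives `q + (#A_k - 1) L` words, less `L - q (n k - 1)` (if positive) when
`a k ∉ A_{k+1}`.

Coincidences are controlled by recognizability: a word of length at least `q` determines its phase
modulo `Q (k-1)` (`phase_modEq`), and if two phases of the same word differ modulo `q`, all holes
carry `a (k-1)` (`hole_eq`). So the only coincidences are between modified words with a single
hole, filled with `a (k-1)`, at positions congruent modulo `Q (k-1)` (`modWord_coincide`,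
`modWord_eq_of_modEq`). There are `2 q - L` single-hole positions, falling into `Q (k-1)` classes
when `2 q - L ≥ Q (k-1)`, which accounts for the loss of `2 q - L - Q (k-1)` words for small `L`.
-/

open Filter

/-- The blocks `p k` of the simple Toeplitz subshift coded by `a` and `n`:
`p 0 = a 0 ^ (n 0 - 1)` and `p (k+1)` consists of `n (k+1)` copies of `p k`
separated by `n (k+1) - 1` single letters `a (k+1)`. -/
def ToeplitzBlock {A : Type*} (a : ℕ → A) (n : ℕ → ℕ) : ℕ → List A
  | 0 => List.replicate (n 0 - 1) (a 0)
  | k + 1 => List.intercalate [a (k + 1)] (List.replicate (n (k + 1)) (ToeplitzBlock a n k))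

/-- `lenPrev a n k = |p (k-1)|`, with the convention `|p (-1)| = 0`. -/
def lenPrev {A : Type*} (a : ℕ → A) (n : ℕ → ℕ) : ℕ → ℕ
  | 0 => 0
  | k + 1 => (ToeplitzBlock a n k).length

/-- The language of the simple Toeplitz subshift: all finite words occurring as a
factor of some block `p k`. -/
def ToeplitzLang {A : Type*} (a : ℕ → A) (n : ℕ → ℕ) : Set (List A) :=
  {u | ∃ k, u <:+: ToeplitzBlock a n k}

/-- The complexity function `C L`. -/
noncomputable def cmpl {A : Type*} (a : ℕ → A) (n : ℕ → ℕ) (L : ℕ) : ℕ :=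
  Set.ncard {u | u ∈ ToeplitzLang a n ∧ u.length = L}

/-- The palindrome complexity function `P L`. -/
noncomputable def palCmpl {A : Type*} (a : ℕ → A) (n : ℕ → ℕ) (L : ℕ) : ℕ :=
  Set.ncard {u | u ∈ ToeplitzLang a n ∧ u.length = L ∧ u.reverse = u}

/-- `Ak a k = {a j : j ≥ k}`. -/
def Ak {A : Type*} (a : ℕ → A) (k : ℕ) : Set A := {x | ∃ j, k ≤ j ∧ a j = x}

/-- The eventual alphabet `A_ev = ⋂ k, A_k`. -/
def Aev {A : Type*} (a : ℕ → A) : Set A := ⋂ k, Ak a k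

/-- `Kf a k = min {j > k : {a (k+1), …, a j} = A (k+1)}`. -/
noncomputable def Kf {A : Type*} (a : ℕ → A) (k : ℕ) : ℕ :=
  sInf {j | k < j ∧ {x | ∃ i, k + 1 ≤ i ∧ i ≤ j ∧ a i = x} = Ak a (k + 1)}

/-- The positions `m i` at which `Kf` increases: `m 0 = 0` and
`m (i+1) = min {j > m i : Kf j > Kf (m i)}`. -/
noncomputable def mseq {A : Type*} (a : ℕ → A) : ℕ → ℕ
  | 0 => 0
  | i + 1 => sInf {j | mseq a i < j ∧ Kf a (mseq a i) < Kf a j}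

/-- The repetitivity function `R L`: the least `L'` such that every word of
length `L` of the language is a factor of every word of length `L'`. -/
noncomputable def repet {A : Type*} (a : ℕ → A) (n : ℕ → ℕ) (L : ℕ) : ℕ :=
  sInf {L' | ∀ u ∈ ToeplitzLang a n, u.length = L →
    ∀ w ∈ ToeplitzLang a n, w.length = L' → u <:+: w}

section Toeplitz

variable {A : Type*} (a : ℕ → A) (n : ℕ → ℕ)

/-! ### The scales and the limit sequence -/

/-- The scales `Q i = n 0 ⋯ n (i-1)`, so that `|p (k-1)| + 1 = Q k` for every `k ≥ 0`. -/
def Q : ℕ → ℕ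
  | 0 => 1
  | i + 1 => Q i * n i

/-- The order of `y`: for `y > 0`, the largest `i` with `Q i ∣ y`. The value at `0` is junk. -/
noncomputable def ord (y : ℕ) : ℕ := sInf {i | ¬ Q n (i + 1) ∣ y}

/-- The one-sided limit of the blocks, indexed by `y ≥ 1`: the letter at `y` is `a i`,
where `i` is the order of `y`. -/
noncomputable def limSeq (y : ℕ) : A := a (ord n y)

/-- The word `f 0 f 1 ⋯ f (L-1)`. -/
def word (L : ℕ) (f : ℕ → A) : List A := (List.range L).map f

/-- The word of length `L` of the limit sequence that starts at position `y`. -/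
noncomputable def window (L y : ℕ) : List A := word L fun t => limSeq a n (y + t)

variable {a n}

lemma word_inj {L : ℕ} {f g : ℕ → A} : word L f = word L g ↔ ∀ t < L, f t = g t := by
  simp [word]

lemma word_add (L M : ℕ) (f : ℕ → A) :
    word (L + M) f = word L f ++ word M (fun t => f (L + t)) := by
  simp [word, List.range_add, Function.comp_def]

lemma Q_pos (hn : ∀ k, 2 ≤ n k) (i : ℕ) : 0 < Q n i := by
  induction i with
  | zero => simp [Q]
  | succ i ih => exact Nat.mul_pos ih (by have := hn i; omega)

lemma two_mul_Q_le (hn : ∀ k, 2 ≤ n k) (i : ℕ) : 2 * Q n i ≤ Q n (i + 1) := by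
  have := Nat.mul_le_mul_left (Q n i) (hn i)
  simp only [Q]; omega

lemma Q_dvd {i j : ℕ} (h : i ≤ j) : Q n i ∣ Q n j := by
  induction j, h using Nat.le_induction with
  | base => rfl
  | succ j _ ih => exact ih.trans (Dvd.intro _ rfl)

lemma lt_Q (hn : ∀ k, 2 ≤ n k) (i : ℕ) : i < Q n i := by
  induction i with
  | zero => simp [Q]
  | succ i ih => have := two_mul_Q_le hn i; omega

lemma limSeq_eq {i y : ℕ} (h : Q n i ∣ y) (h' : ¬ Q n (i + 1) ∣ y) : limSeq a n y = a i := by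
  have : ord n y = i := by
    apply le_antisymm
    · exact Nat.sInf_le h'
    · by_contra! hlt
      have hm : ord n y ∈ {i | ¬ Q n (i + 1) ∣ y} := Nat.sInf_mem ⟨i, h'⟩
      exact hm ((Q_dvd hlt).trans h)
  rw [limSeq, this]

/-- A number not divisible by `Q i` has an order below `i`. -/
lemma exists_order {i y : ℕ} (h : ¬ Q n i ∣ y) : ∃ j < i, Q n j ∣ y ∧ ¬ Q n (j + 1) ∣ y := by
  induction i with
  | zero => simp [Q] at h
  | succ i ih =>
    by_cases hi : Q n i ∣ y
    · exact ⟨i, by omega, hi, h⟩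
    · obtain ⟨j, hj, hh⟩ := ih hi
      exact ⟨j, by omega, hh⟩

/-- Off the multiples of `Q i` the limit sequence is `Q i`-periodic. -/
lemma limSeq_congr {i y y' : ℕ} (h : ¬ Q n i ∣ y) (hy : y ≡ y' [MOD Q n i]) :
    limSeq a n y = limSeq a n y' := by
  obtain ⟨j, hj, h1, h2⟩ := exists_order h
  rw [limSeq_eq h1 h2, limSeq_eq]
  · exact (hy.dvd_iff (Q_dvd hj.le)).1 h1
  · exact fun h3 => h2 ((hy.dvd_iff (Q_dvd hj)).2 h3)

lemma limSeq_mem_Ak (hn : ∀ k, 2 ≤ n k) {i y : ℕ} (hy : 0 < y) (h : Q n i ∣ y) :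
    limSeq a n y ∈ Ak a i := by
  have hy' : ¬ Q n y ∣ y := fun hd => by
    have := Nat.le_of_dvd hy hd
    have := lt_Q hn y
    omega
  obtain ⟨j, -, h1, h2⟩ := exists_order hy'
  refine ⟨j, ?_, (limSeq_eq h1 h2).symm⟩
  by_contra! hlt
  exact h2 ((Q_dvd hlt).trans h)

lemma exists_dvd_add {q : ℕ} (hq : 0 < q) (s : ℕ) : ∃ t < q, q ∣ s + t := by
  refine ⟨(q - s % q) % q, Nat.mod_lt _ hq, ?_⟩
  have := Nat.mod_lt s hq
  rw [Nat.dvd_iff_mod_eq_zero, Nat.add_mod, Nat.mod_mod, Nat.add_mod_mod]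
  rw [Nat.add_sub_cancel' this.le, Nat.mod_self]

/-! ### Blocks and language in terms of the limit sequence -/

lemma block_eq (hn : ∀ k, 2 ≤ n k) (k : ℕ) :
    ToeplitzBlock a n k = window a n (Q n (k + 1) - 1) 1 := by
  induction k with
  | zero =>
    have h0 : Q n (0 + 1) = n 0 := by simp [Q]
    rw [h0, ToeplitzBlock, eq_comm, List.eq_replicate_iff]
    refine ⟨by simp [window, word], ?_⟩
    intro b hb
    simp only [window, word, List.mem_map, List.mem_range] at hb
    obtain ⟨t, ht, rfl⟩ := hb
    refine limSeq_eq (by simp [Q]) fun hd => ?_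
    have := Nat.le_of_dvd (by omega) hd
    omega
  | succ k ih =>
    have hq := Q_pos hn (k + 1)
    have hN : Q n (k + 1 + 1) = Q n (k + 1) * n (k + 1) := rfl
    set q := Q n (k + 1) with hqdef
    have key : ∀ m, m + 1 ≤ n (k + 1) →
        List.intercalate [a (k + 1)] (List.replicate (m + 1) (ToeplitzBlock a n k))
          = window a n ((m + 1) * q - 1) 1 := by
      intro m
      induction m with
      | zero => intro _; simp [ih, List.intercalate]
      | succ m ihm =>
        intro hm
        have hlt : (m + 1 + 1) * q ≤ Q n (k + 1 + 1) := by
          rw [hN, mul_comm q]; exact Nat.mul_le_mul_right _ hm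
        have hexp : (m + 1 + 1) * q = (m + 1) * q + q := by ring
        have hpos : 1 ≤ (m + 1) * q := Nat.mul_pos (by omega) hq
        have hstep : List.intercalate [a (k + 1)]
              (List.replicate (m + 1 + 1) (ToeplitzBlock a n k))
            = ToeplitzBlock a n k ++ [a (k + 1)] ++ List.intercalate [a (k + 1)]
              (List.replicate (m + 1) (ToeplitzBlock a n k)) := by
          simp [List.replicate_succ, List.intercalate]
        rw [hstep, ihm (by omega), ih, window, window, window,
          show (m + 1 + 1) * q - 1 = (q - 1) + 1 + ((m + 1) * q - 1) by omega,
          word_add, word_add]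
        congr 1
        · congr 1
          have hq1 : 1 + (q - 1) = q := by omega
          simp only [word, List.range_one, List.map_cons, List.map_nil, Nat.add_zero, hq1]
          rw [limSeq_eq (i := k + 1) (hqdef ▸ dvd_rfl)]
          intro hd
          have := Nat.le_of_dvd hq hd
          have := two_mul_Q_le hn (k + 1)
          omega
        · rw [word_inj]
          intro t ht
          have hs : 1 + (q - 1 + 1 + t) = 1 + t + q := by omega
          rw [hs]
          -- below `Q (k+2)` every multiple of `Q (k+1)` carries the letter `a (k+1)`
          by_cases hd : q ∣ 1 + t
          · rw [limSeq_eq (i := k + 1) hd, limSeq_eq (i := k + 1) ((Nat.dvd_add_self_right).2 hd)]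
            · intro h; have := Nat.le_of_dvd (by omega) h
              omega
            · intro h; have := Nat.le_of_dvd (by omega) h
              omega
          · exact limSeq_congr (i := k + 1) hd (by simp [Nat.ModEq, ← hqdef])
    obtain ⟨m, hm⟩ : ∃ m, n (k + 1) = m + 1 := ⟨n (k + 1) - 1, by have := hn (k + 1); omega⟩
    have := key m hm.ge
    rw [ToeplitzBlock, hm, this, hN, hm, mul_comm]

lemma length_block (hn : ∀ k, 2 ≤ n k) (k : ℕ) :
    (ToeplitzBlock a n k).length = Q n (k + 1) - 1 := by
  simp [block_eq hn, window, word]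

lemma lenPrev_eq (hn : ∀ k, 2 ≤ n k) (k : ℕ) : lenPrev a n k = Q n k - 1 := by
  cases k with
  | zero => simp [lenPrev, Q]
  | succ k => exact length_block hn k

lemma mem_lang_iff (hn : ∀ k, 2 ≤ n k) (L : ℕ) (u : List A) :
    (u ∈ ToeplitzLang a n ∧ u.length = L) ↔ ∃ y, 0 < y ∧ window a n L y = u := by
  constructor
  · rintro ⟨⟨k, l, r, h⟩, rfl⟩
    refine ⟨1 + l.length, by omega, ?_⟩
    rw [block_eq hn] at h
    have hlen : l.length + u.length + r.length = Q n (k + 1) - 1 := by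
      have := congrArg List.length h
      simpa [window, word, add_assoc] using this
    rw [window, ← hlen, word_add, word_add] at h
    obtain ⟨h1, -⟩ := List.append_inj h (by simp [word])
    obtain ⟨-, h2⟩ := List.append_inj h1 (by simp [word])
    refine Eq.trans ?_ h2.symm
    rw [window, word_inj]
    intro t _
    rw [Nat.add_assoc]
  · rintro ⟨y, hy, rfl⟩
    refine ⟨⟨y + L, ?_⟩, by simp [window, word]⟩
    rw [block_eq hn]
    have := lt_Q hn (y + L + 1)
    have hlen : Q n (y + L + 1) - 1 = (y - 1) + L + (Q n (y + L + 1) - 1 - (y - 1 + L)) := by omega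
    have hmid : window a n L y = word L fun t => limSeq a n (1 + (y - 1 + t)) := by
      rw [window, word_inj]
      intro t _
      congr 1; omega
    rw [hlen, hmid, window, word_add, word_add]
    exact ⟨_, _, rfl⟩

/-! ### Recognizability of the phase -/

/-- A word of length at least `Q (K+1)` that agrees with the limit sequence off the multiples of
`Q (K+1)` determines its phase modulo `Q K`. If two phases agree modulo `Q i` but not modulo
`Q (i+1)`, some position of the window has order exactly `i+1` for one phase and exactly `i` for
the other, hence carries both `a (i+1)` and `a i`. -/
lemma phase_modEq (hn : ∀ k, 2 ≤ n k) (ha : ∀ k, a k ≠ a (k + 1)) {K L s s' : ℕ} {f f' : ℕ → A}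
    (hL : Q n (K + 1) ≤ L)
    (hf : ∀ t < L, ¬ Q n (K + 1) ∣ s + t → f t = limSeq a n (s + t))
    (hf' : ∀ t < L, ¬ Q n (K + 1) ∣ s' + t → f' t = limSeq a n (s' + t))
    (hff : ∀ t < L, f t = f' t) : s ≡ s' [MOD Q n K] := by
  suffices ∀ i ≤ K, s ≡ s' [MOD Q n i] from this K le_rfl
  intro i
  induction i with
  | zero => intro _; simp [Q, Nat.modEq_one]
  | succ i ih =>
    intro hi
    have hmod := ih (by omega)
    by_contra hne
    obtain ⟨t, ht, h1, h2⟩ : ∃ t < Q n (i + 1 + 1), Q n (i + 1) ∣ s + t ∧ ¬ Q n (i + 1 + 1) ∣ s + t := by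
      obtain ⟨t, ht, h1⟩ := exists_dvd_add (Q_pos hn (i + 1)) s
      have h2Q := two_mul_Q_le hn (i + 1)
      by_cases h2 : Q n (i + 1 + 1) ∣ s + t
      · refine ⟨t + Q n (i + 1), by omega, ?_, ?_⟩
        · rw [← add_assoc]; exact (Nat.dvd_add_self_right).2 h1
        · rw [← add_assoc, Nat.dvd_add_right h2]
          intro hd
          have := Nat.le_of_dvd (Q_pos hn (i + 1)) hd
          have := Q_pos hn (i + 1)
          omega
      · exact ⟨t, by omega, h1, h2⟩
    have htL : t < L :=
      lt_of_lt_of_le ht ((Nat.le_of_dvd (Q_pos hn _) (Q_dvd (by omega))).trans hL)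
    have h3 : ¬ Q n (i + 1) ∣ s' + t := by
      intro h3
      have : s + t ≡ s' + t [MOD Q n (i + 1)] :=
        (Nat.modEq_zero_iff_dvd.2 h1).trans (Nat.modEq_zero_iff_dvd.2 h3).symm
      exact hne (Nat.ModEq.add_right_cancel' t this)
    have h4 : Q n i ∣ s' + t :=
      ((hmod.add_right t).dvd_iff dvd_rfl).1 ((Q_dvd (by omega)).trans h1)
    have e1 := hf t htL fun h => h2 ((Q_dvd (by omega)).trans h)
    have e2 := hf' t htL fun h => h3 ((Q_dvd (by omega)).trans h)
    rw [limSeq_eq h1 h2] at e1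
    rw [limSeq_eq h4 h3] at e2
    exact ha i (by rw [← e1, ← e2, hff t htL])

/-- If the phases of two such words differ modulo `Q (K+1)`, every multiple of `Q (K+1)` in the
window is filled with `a K`. -/
lemma hole_eq (hn : ∀ k, 2 ≤ n k) (ha : ∀ k, a k ≠ a (k + 1)) {K L s s' : ℕ} {f f' : ℕ → A}
    (hL : Q n (K + 1) ≤ L)
    (hf : ∀ t < L, ¬ Q n (K + 1) ∣ s + t → f t = limSeq a n (s + t))
    (hf' : ∀ t < L, ¬ Q n (K + 1) ∣ s' + t → f' t = limSeq a n (s' + t))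
    (hff : ∀ t < L, f t = f' t) (hne : ¬ s ≡ s' [MOD Q n (K + 1)])
    {t : ℕ} (ht : t < L) (hd : Q n (K + 1) ∣ s + t) : f t = a K := by
  have hmod := phase_modEq hn ha hL hf hf' hff
  have h3 : ¬ Q n (K + 1) ∣ s' + t := by
    intro h3
    have : s + t ≡ s' + t [MOD Q n (K + 1)] :=
      (Nat.modEq_zero_iff_dvd.2 hd).trans (Nat.modEq_zero_iff_dvd.2 h3).symm
    exact hne (Nat.ModEq.add_right_cancel' t this)
  have h4 : Q n K ∣ s' + t :=
    ((hmod.add_right t).dvd_iff dvd_rfl).1 ((Q_dvd (by omega)).trans hd)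
  rw [hff t ht, hf' t ht h3, limSeq_eq h4 h3]

/-! ### Periodic words and their one-letter modifications -/

variable (a n)

/-- The `Q (K+1)`-periodic sequence `p_K a_{K+1} p_K a_{K+1} ⋯`, indexed so that the letters
`a_{K+1}` sit at the multiples of `Q (K+1)`, called holes. -/
noncomputable def perSeq (K y : ℕ) : A := if Q n (K + 1) ∣ y then a (K + 1) else limSeq a n y

/-- The word of length `L` of the periodic sequence that starts at phase `s`. -/
noncomputable def perWord (K L s : ℕ) : List A := word L fun t => perSeq a n K (s + t)

/-- The word of length `L` obtained from the periodic sequence, in the phase for which position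
`j` is a hole, by replacing the letter at `j` by `b`. The offset `Q (K+2)`, a multiple of the
period, only serves to keep the subtraction in `ℕ` exact for `j < L ≤ Q (K+2)`. -/
noncomputable def modWord (K L : ℕ) (p : ℕ × A) : List A :=
  word L fun t => if t = p.1 then p.2 else perSeq a n K (Q n (K + 2) - p.1 + t)

variable {a n}

lemma perSeq_congr {K y y' : ℕ} (h : y ≡ y' [MOD Q n (K + 1)]) :
    perSeq a n K y = perSeq a n K y' := by
  unfold perSeq
  by_cases hd : Q n (K + 1) ∣ y
  · rw [if_pos hd, if_pos ((h.dvd_iff dvd_rfl).1 hd)]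
  · rw [if_neg hd, if_neg (fun h' => hd ((h.dvd_iff dvd_rfl).2 h')), limSeq_congr hd h]

/-- Away from the multiples of `Q (K+2)` the limit sequence is the periodic one. -/
lemma limSeq_eq_perSeq {K y : ℕ} (h : ¬ Q n (K + 2) ∣ y) : limSeq a n y = perSeq a n K y := by
  unfold perSeq
  split_ifs with hd
  · exact limSeq_eq hd h
  · rfl

lemma dvd_hole {K j : ℕ} (hj : j < Q n (K + 2)) : Q n (K + 1) ∣ Q n (K + 2) - j + j := by
  rw [Nat.sub_add_cancel hj.le]; exact Q_dvd (by omega)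

lemma modEq_of_dvd_add {q s s' t : ℕ} (h : q ∣ s + t) (h' : q ∣ s' + t) : s ≡ s' [MOD q] :=
  Nat.ModEq.add_right_cancel' t
    ((Nat.modEq_zero_iff_dvd.2 h).trans (Nat.modEq_zero_iff_dvd.2 h').symm)

lemma modWord_eq_perWord {K L s j : ℕ} (hj : j < Q n (K + 2)) (h : Q n (K + 1) ∣ s + j) :
    modWord a n K L (j, a (K + 1)) = perWord a n K L s := by
  rw [modWord, perWord, word_inj]
  intro t _
  have hc : perSeq a n K (Q n (K + 2) - j + t) = perSeq a n K (s + t) :=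
    perSeq_congr ((modEq_of_dvd_add (dvd_hole hj) h).add_right t)
  by_cases htj : t = j
  · subst htj
    simp [perSeq, h]
  · simp [htj, hc]

/-- A window of length at most `Q (K+2)` meeting a multiple of `Q (K+2)` is a modified word. -/
lemma window_eq_modWord {K L y j : ℕ} (hL : L ≤ Q n (K + 2)) (hj : j < L)
    (h : Q n (K + 2) ∣ y + j) :
    window a n L y = modWord a n K L (j, limSeq a n (y + j)) := by
  rw [modWord, window, word_inj]
  intro t ht
  by_cases htj : t = j
  · subst htj; simp
  · have hnd : ¬ Q n (K + 2) ∣ y + t := by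
      intro hd
      have h1 : j ≡ t [MOD Q n (K + 2)] := Nat.ModEq.add_left_cancel' y
        ((Nat.modEq_zero_iff_dvd.2 h).trans (Nat.modEq_zero_iff_dvd.2 hd).symm)
      exact htj (h1.eq_of_lt_of_lt (by omega) (by omega)).symm
    simp only [htj, if_false]
    rw [limSeq_eq_perSeq hnd]
    exact perSeq_congr ((modEq_of_dvd_add ((Q_dvd (by omega)).trans h)
      (dvd_hole (by omega))).add_right t)

lemma window_eq_perWord {K L y s : ℕ} (hs : y ≡ s [MOD Q n (K + 1)])
    (h : ∀ t < L, ¬ Q n (K + 2) ∣ y + t) : window a n L y = perWord a n K L s := by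
  rw [perWord, window, word_inj]
  intro t ht
  rw [limSeq_eq_perSeq (h t ht)]
  exact perSeq_congr (hs.add_right t)

/-- For `b = a i` with `i ≥ K+2`, the modified word occurs around the position `Q i`. -/
lemma modWord_mem (hn : ∀ k, 2 ≤ n k) {K L j : ℕ} {b : A} (hL : L ≤ Q n (K + 2)) (hj : j < L)
    (hb : b ∈ Ak a (K + 2)) : ∃ y, 0 < y ∧ window a n L y = modWord a n K L (j, b) := by
  obtain ⟨i, hi, rfl⟩ := hb
  have hle : Q n (K + 2) ≤ Q n i := Nat.le_of_dvd (Q_pos hn i) (Q_dvd hi)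
  refine ⟨Q n i - j, by omega, ?_⟩
  have hij : Q n i - j + j = Q n i := by omega
  rw [window_eq_modWord hL hj (by rw [hij]; exact Q_dvd hi), hij]
  congr 2
  refine limSeq_eq dvd_rfl fun hd => ?_
  have := Nat.le_of_dvd (Q_pos hn i) hd
  have := two_mul_Q_le hn i
  have := Q_pos hn i
  omega

/-! ### Coincidences -/

lemma perSeq_agree (K s L : ℕ) :
    ∀ t < L, ¬ Q n (K + 1) ∣ s + t → perSeq a n K (s + t) = limSeq a n (s + t) := by
  intro t _ h
  simp [perSeq, h]

lemma modWord_agree {K L j : ℕ} {b : A} (hj : j < Q n (K + 2)) :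
    ∀ t < L, ¬ Q n (K + 1) ∣ Q n (K + 2) - j + t →
      (if t = j then b else perSeq a n K (Q n (K + 2) - j + t))
        = limSeq a n (Q n (K + 2) - j + t) := by
  intro t _ h
  have : t ≠ j := by
    rintro rfl
    exact h (dvd_hole hj)
  simp [this, perSeq, h]

lemma perWord_inj (hn : ∀ k, 2 ≤ n k) (ha : ∀ k, a k ≠ a (k + 1)) {K L s s' : ℕ}
    (hL : Q n (K + 1) ≤ L) (h : perWord a n K L s = perWord a n K L s') :
    s ≡ s' [MOD Q n (K + 1)] := by
  by_contra hne
  rw [perWord, perWord, word_inj] at h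
  obtain ⟨t, ht, hd⟩ := exists_dvd_add (Q_pos hn (K + 1)) s
  have := hole_eq hn ha hL (perSeq_agree K s L) (perSeq_agree K s' L) h hne (ht.trans_le hL) hd
  simp only [perSeq, hd, if_true] at this
  exact ha K this.symm

lemma perWord_ne_modWord (hn : ∀ k, 2 ≤ n k) (ha : ∀ k, a k ≠ a (k + 1)) {K L s j : ℕ} {b : A}
    (hL : Q n (K + 1) ≤ L) (hL2 : L ≤ Q n (K + 2)) (hj : j < L) (hb : b ≠ a (K + 1)) :
    perWord a n K L s ≠ modWord a n K L (j, b) := by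
  intro h
  rw [perWord, modWord, word_inj] at h
  by_cases hmod : s ≡ Q n (K + 2) - j [MOD Q n (K + 1)]
  · have hd : Q n (K + 1) ∣ s + j :=
      ((hmod.add_right j).dvd_iff dvd_rfl).2 (dvd_hole (by omega))
    have := h j hj
    simp only [perSeq, hd, if_true] at this
    exact hb this.symm
  · obtain ⟨t, ht, hd⟩ := exists_dvd_add (Q_pos hn (K + 1)) s
    have := hole_eq hn ha hL (perSeq_agree K s L) (modWord_agree (by omega)) h hmod
      (ht.trans_le hL) hd
    simp only [perSeq, hd, if_true] at this
    exact ha K this.symm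

/-- If all holes of the modified word carry `a K`, then the modified position is its only hole
and the new letter is `a K`. -/
lemma single_hole (ha : ∀ k, a k ≠ a (k + 1)) {K L j : ℕ} {b : A} (hq : 0 < Q n (K + 1))
    (hL2 : L ≤ Q n (K + 2)) (hj : j < L)
    (h : ∀ t < L, Q n (K + 1) ∣ Q n (K + 2) - j + t →
      (if t = j then b else perSeq a n K (Q n (K + 2) - j + t)) = a K) :
    b = a K ∧ j < Q n (K + 1) ∧ L ≤ j + Q n (K + 1) := by
  have hother : ∀ t < L, t ≠ j → ¬ Q n (K + 1) ∣ Q n (K + 2) - j + t := by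
    intro t ht htj hd
    have := h t ht hd
    simp only [htj, if_false, perSeq, hd, if_true] at this
    exact ha K this.symm
  refine ⟨?_, ?_, ?_⟩
  · simpa using h j hj (dvd_hole (by omega))
  · by_contra! hle
    refine hother (j - Q n (K + 1)) (by omega) (by omega) ?_
    rw [← Nat.dvd_add_self_right, show Q n (K + 2) - j + (j - Q n (K + 1)) + Q n (K + 1)
      = Q n (K + 2) - j + j by omega]
    exact dvd_hole (by omega)
  · by_contra! hlt
    refine hother (j + Q n (K + 1)) (by omega) (by omega) ?_
    rw [← add_assoc, Nat.dvd_add_self_right]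
    exact dvd_hole (by omega)

/-- Different modification data `(j, b)`, `(j', b')` give the same word only if both words have a
single hole, filled with `a K`, and the two holes agree modulo `Q K`. -/
lemma modWord_coincide (hn : ∀ k, 2 ≤ n k) (ha : ∀ k, a k ≠ a (k + 1)) {K L j j' : ℕ} {b b' : A}
    (hL : Q n (K + 1) ≤ L) (hL2 : L ≤ Q n (K + 2)) (hj : j < L) (hj' : j' < L)
    (hb : b ≠ a (K + 1)) (h : modWord a n K L (j, b) = modWord a n K L (j', b')) :
    (j = j' ∧ b = b') ∨
      ((b = a K ∧ j < Q n (K + 1) ∧ L ≤ j + Q n (K + 1)) ∧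
        (b' = a K ∧ j' < Q n (K + 1) ∧ L ≤ j' + Q n (K + 1)) ∧ j ≡ j' [MOD Q n K]) := by
  rw [modWord, modWord, word_inj] at h
  simp only at h
  have hq := Q_pos hn (K + 1)
  by_cases hmod : Q n (K + 2) - j ≡ Q n (K + 2) - j' [MOD Q n (K + 1)]
  · left
    have hjj : j = j' := by
      by_contra hne
      have hd : Q n (K + 1) ∣ Q n (K + 2) - j' + j :=
        ((hmod.add_right j).dvd_iff dvd_rfl).1 (dvd_hole (by omega))
      have := h j hj
      simp only [if_true, hne, if_false, perSeq, hd] at this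
      exact hb this
    subst hjj
    exact ⟨rfl, by simpa using h j hj⟩
  · right
    have h1 := single_hole ha hq hL2 hj fun t ht hd =>
      hole_eq hn ha hL (modWord_agree (by omega)) (modWord_agree (by omega)) h hmod ht hd
    have h2 := single_hole ha hq hL2 hj' fun t ht hd =>
      hole_eq hn ha hL (modWord_agree (by omega)) (modWord_agree (by omega))
        (fun t ht => (h t ht).symm) (fun h => hmod h.symm) ht hd
    refine ⟨h1, h2, ?_⟩
    have h3 := phase_modEq hn ha hL (modWord_agree (by omega)) (modWord_agree (by omega)) h
    have h4 := (h3.add_right (j + j')).symm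
    rw [show Q n (K + 2) - j + (j + j') = Q n (K + 2) + j' by omega,
      show Q n (K + 2) - j' + (j + j') = Q n (K + 2) + j by omega] at h4
    exact Nat.ModEq.add_left_cancel' _ h4

/-- Single-hole words filled with `a K` are `Q K`-periodic, so they only depend on the position
of the hole modulo `Q K`. -/
lemma modWord_eq_of_modEq {K L j j' : ℕ} (hL2 : L ≤ Q n (K + 2)) (hjL : j < L) (hjL' : j' < L)
    (hj : j < Q n (K + 1)) (hj1 : L ≤ j + Q n (K + 1))
    (hj' : j' < Q n (K + 1)) (hj1' : L ≤ j' + Q n (K + 1)) (h : j ≡ j' [MOD Q n K]) :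
    modWord a n K L (j, a K) = modWord a n K L (j', a K) := by
  have hform : ∀ i, i < L → i < Q n (K + 1) → L ≤ i + Q n (K + 1) → ∀ t < L,
      (if t = i then a K else perSeq a n K (Q n (K + 2) - i + t))
        = if Q n K ∣ Q n (K + 2) - i + t then a K else limSeq a n (Q n (K + 2) - i + t) := by
    intro i hiL hi hi1 t ht
    by_cases hti : t = i
    · subst hti
      rw [if_pos rfl, if_pos ((Q_dvd (by omega)).trans (dvd_hole (K := K) (by omega)))]
    · have hnd : ¬ Q n (K + 1) ∣ Q n (K + 2) - i + t := by
        intro hd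
        have h1 : i ≡ t [MOD Q n (K + 1)] := Nat.ModEq.add_left_cancel' (Q n (K + 2) - i)
          ((Nat.modEq_zero_iff_dvd.2 (dvd_hole (by omega))).trans
            (Nat.modEq_zero_iff_dvd.2 hd).symm)
        rcases lt_or_gt_of_ne hti with hlt | hgt
        · exact hti (h1.eq_of_lt_of_lt hi (by omega)).symm
        · have := Nat.le_of_dvd (by omega) ((Nat.modEq_iff_dvd' hgt.le).1 h1)
          omega
      rw [if_neg hti, perSeq, if_neg hnd]
      split_ifs with hd
      · exact limSeq_eq hd hnd
      · rfl
  rw [modWord, modWord, word_inj]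
  intro t ht
  simp only
  rw [hform j hjL hj hj1 t ht, hform j' hjL' hj' hj1' t ht]
  have hmod : Q n (K + 2) - j + t ≡ Q n (K + 2) - j' + t [MOD Q n K] := by
    apply Nat.ModEq.add_right
    apply Nat.ModEq.add_right_cancel' (j + j')
    rw [show Q n (K + 2) - j + (j + j') = Q n (K + 2) + j' by omega,
      show Q n (K + 2) - j' + (j + j') = Q n (K + 2) + j by omega]
    exact h.symm.add_left _
  by_cases hd : Q n K ∣ Q n (K + 2) - j + t
  · rw [if_pos hd, if_pos ((hmod.dvd_iff dvd_rfl).1 hd)]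
  · rw [if_neg hd, if_neg (fun h' => hd ((hmod.dvd_iff dvd_rfl).2 h')), limSeq_congr hd hmod]

/-! ### Counting -/

variable (a n)

open Classical in
/-- The phases of the periodic words of length `L` that occur: all of them if `a (K+1)` recurs
later, otherwise those for which the window avoids the multiples of `Q (K+2)`. -/
noncomputable def phases (K L : ℕ) : Finset ℕ :=
  {s ∈ Finset.Icc 1 (Q n (K + 1)) | a (K + 1) ∈ Ak a (K + 2) ∨ s + L ≤ Q n (K + 2)}

variable {a n}

lemma mem_Ak_succ {K : ℕ} {b : A} (hb : b ≠ a K) (h : b ∈ Ak a K) : b ∈ Ak a (K + 1) := by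
  obtain ⟨i, hi, rfl⟩ := h
  refine ⟨i, ?_, rfl⟩
  rcases hi.lt_or_eq with h | rfl
  · exact h
  · exact absurd rfl hb

lemma Ak_succ_subset (K : ℕ) : Ak a (K + 1) ⊆ Ak a K := by
  rintro _ ⟨i, hi, rfl⟩
  exact ⟨i, by omega, rfl⟩

open Classical in
lemma card_phases (K L : ℕ) :
    (phases a n K L).card = if a (K + 1) ∈ Ak a (K + 2) then Q n (K + 1)
      else min (Q n (K + 1)) (Q n (K + 2) - L) := by
  split_ifs with h
  · simp [phases, h]
  · have : phases a n K L = Finset.Icc 1 (min (Q n (K + 1)) (Q n (K + 2) - L)) := by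
      ext s
      simp only [phases, h, false_or, Finset.mem_filter, Finset.mem_Icc]
      omega
    rw [this, Nat.card_Icc]; omega

variable (a n) [Fintype A]

open Classical in
/-- The letters that can replace `a (K+1)` in a hole. -/
noncomputable def newLetters (K : ℕ) : Finset A := (Ak a (K + 1)).toFinset.erase (a (K + 1))

open Classical in
/-- A set of representatives for the modified words. For the letter `a K` the single-hole
positions `L - Q (K+1) ≤ j < Q (K+1)` are represented by the first `Q K` of them. -/
noncomputable def modReps (K L : ℕ) : Finset (ℕ × A) :=
  (Finset.range L ×ˢ newLetters a K) \
    (Finset.Ico (L - Q n (K + 1) + Q n K) (Q n (K + 1)) ×ˢ {b ∈ newLetters a K | b = a K})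

variable {a n}

lemma mem_newLetters {K : ℕ} {b : A} : b ∈ newLetters a K ↔ b ≠ a (K + 1) ∧ b ∈ Ak a (K + 1) := by
  simp [newLetters]

lemma mem_modReps {K L j : ℕ} {b : A} : (j, b) ∈ modReps a n K L ↔
    (j < L ∧ b ∈ newLetters a K) ∧
      ¬ (L - Q n (K + 1) + Q n K ≤ j ∧ j < Q n (K + 1) ∧ b = a K) := by
  simp only [modReps, Finset.mem_sdiff, Finset.mem_product, Finset.mem_range, Finset.mem_Ico,
    Finset.mem_filter]
  tauto

/-- Every modified word is represented in `modReps`. -/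
lemma exists_rep (hn : ∀ k, 2 ≤ n k) {K L j : ℕ} {b : A}
    (hL : Q n (K + 1) ≤ L) (hL2 : L ≤ Q n (K + 2)) (hj : j < L) (hb : b ∈ newLetters a K) :
    ∃ p ∈ modReps a n K L, modWord a n K L p = modWord a n K L (j, b) := by
  by_cases hD : (j, b) ∈ modReps a n K L
  · exact ⟨_, hD, rfl⟩
  rw [mem_modReps] at hD
  have hq' := Q_pos hn K
  obtain ⟨h1, h2, rfl⟩ : L - Q n (K + 1) + Q n K ≤ j ∧ j < Q n (K + 1) ∧ b = a K := by
    by_contra hc; exact hD ⟨⟨hj, hb⟩, hc⟩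
  -- the representative is congruent to `j` and lies in `[L - Q (K+1), L - Q (K+1) + Q K)`
  set c := L - Q n (K + 1) with hc
  have hlt := Nat.mod_lt (j - c) hq'
  have hmod : c + (j - c) % Q n K ≡ j [MOD Q n K] := by
    have : c + (j - c) % Q n K ≡ c + (j - c) [MOD Q n K] := (Nat.mod_modEq _ _).add_left c
    rwa [Nat.add_sub_cancel' (by omega)] at this
  refine ⟨(c + (j - c) % Q n K, a K), mem_modReps.2 ⟨⟨by omega, hb⟩, by omega⟩, ?_⟩
  exact modWord_eq_of_modEq hL2 (by omega) hj (by omega) (by omega) h2 (by omega) hmod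

lemma modWord_injOn (hn : ∀ k, 2 ≤ n k) (ha : ∀ k, a k ≠ a (k + 1)) {K L : ℕ}
    (hL : Q n (K + 1) ≤ L) (hL2 : L ≤ Q n (K + 2)) :
    Set.InjOn (modWord a n K L) (modReps a n K L) := by
  rintro ⟨j, b⟩ hp ⟨j', b'⟩ hp' h
  rw [Finset.mem_coe, mem_modReps] at hp hp'
  obtain ⟨⟨hj, hb⟩, hc⟩ := hp
  obtain ⟨⟨hj', hb'⟩, hc'⟩ := hp'
  rcases modWord_coincide hn ha hL hL2 hj hj' (mem_newLetters.1 hb).1 h with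
    ⟨rfl, rfl⟩ | ⟨⟨rfl, h1, h2⟩, ⟨rfl, h1', h2'⟩, hmod⟩
  · rfl
  · -- both positions lie in the interval `[L - Q (K+1), L - Q (K+1) + Q K)` of length `Q K`
    have k1 : j < L - Q n (K + 1) + Q n K := by
      by_contra hle; exact hc ⟨by omega, h1, rfl⟩
    have k1' : j' < L - Q n (K + 1) + Q n K := by
      by_contra hle; exact hc' ⟨by omega, h1', rfl⟩
    have hmod' : j - (L - Q n (K + 1)) ≡ j' - (L - Q n (K + 1)) [MOD Q n K] := by
      apply Nat.ModEq.add_right_cancel' (L - Q n (K + 1))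
      rwa [Nat.sub_add_cancel (by omega), Nat.sub_add_cancel (by omega)]
    have := hmod'.eq_of_lt_of_lt (by omega) (by omega)
    have : j = j' := by omega
    rw [this]

open Classical in
/-- The words of length `L` of the language are the occurring periodic words together with the
modified words. -/
lemma words_eq (hn : ∀ k, 2 ≤ n k) {K L : ℕ}
    (hL : Q n (K + 1) ≤ L) (hL2 : L ≤ Q n (K + 2)) :
    {u | u ∈ ToeplitzLang a n ∧ u.length = L} =
      (((phases a n K L).image (perWord a n K L) ∪
        (modReps a n K L).image (modWord a n K L) : Finset (List A)) : Set (List A)) := by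
  have hq := Q_pos hn (K + 1)
  have hq2 := Q_pos hn (K + 2)
  have hdvd : Q n (K + 1) ∣ Q n (K + 2) := Q_dvd (by omega)
  ext u
  rw [Set.mem_ofPred_eq, mem_lang_iff hn]
  simp only [Finset.coe_union, Finset.coe_image, Set.mem_union, Set.mem_image, Finset.mem_coe]
  constructor
  · rintro ⟨y, hy, rfl⟩
    have hs : y ≡ (y - 1) % Q n (K + 1) + 1 [MOD Q n (K + 1)] := by
      have : (y - 1) + 1 ≡ (y - 1) % Q n (K + 1) + 1 [MOD Q n (K + 1)] :=
        (Nat.mod_modEq _ _).symm.add_right 1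
      rwa [Nat.sub_add_cancel hy] at this
    have hslt := Nat.mod_lt (y - 1) hq
    by_cases hex : ∃ j < L, Q n (K + 2) ∣ y + j
    · obtain ⟨j, hj, hd⟩ := hex
      have hb : limSeq a n (y + j) ∈ Ak a (K + 2) := limSeq_mem_Ak hn (by omega) hd
      rw [window_eq_modWord hL2 hj hd]
      by_cases hba : limSeq a n (y + j) = a (K + 1)
      · left
        rw [hba] at hb ⊢
        refine ⟨(y - 1) % Q n (K + 1) + 1, ?_, ?_⟩
        · simp only [phases, Finset.mem_filter, Finset.mem_Icc]
          exact ⟨⟨by omega, by omega⟩, Or.inl hb⟩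
        · exact (modWord_eq_perWord (by omega)
            (((hs.add_right j).dvd_iff dvd_rfl).1 (hdvd.trans hd))).symm
      · right
        exact exists_rep hn hL hL2 hj (mem_newLetters.2 ⟨hba, Ak_succ_subset _ hb⟩)
    · push Not at hex
      left
      refine ⟨(y - 1) % Q n (K + 1) + 1, ?_, (window_eq_perWord hs hex).symm⟩
      simp only [phases, Finset.mem_filter, Finset.mem_Icc]
      refine ⟨⟨by omega, by omega⟩, Or.inr ?_⟩
      -- the next multiple of `Q (K+2)` after `y - 1` lies beyond the window
      have hr := Nat.mod_lt (y - 1) hq2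
      have hle : (y - 1) % Q n (K + 1) ≤ (y - 1) % Q n (K + 2) := by
        rw [← Nat.mod_mod_of_dvd (y - 1) hdvd]; exact Nat.mod_le _ _
      by_contra! hlt
      refine hex (Q n (K + 2) - ((y - 1) % Q n (K + 2) + 1)) (by omega) ?_
      have hdm := Nat.div_add_mod (y - 1) (Q n (K + 2))
      refine ⟨(y - 1) / Q n (K + 2) + 1, ?_⟩
      rw [mul_add, mul_one]
      omega
  · rintro (⟨s, hs, rfl⟩ | ⟨⟨j, b⟩, hp, rfl⟩)
    · simp only [phases, Finset.mem_filter, Finset.mem_Icc] at hs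
      obtain ⟨⟨hs1, hs2⟩, hmem | hle⟩ := hs
      · obtain ⟨j, hj, hd⟩ := exists_dvd_add hq s
        rw [← modWord_eq_perWord (a := a) (L := L) (by omega) hd]
        exact modWord_mem hn hL2 (by omega) hmem
      · refine ⟨s, hs1, window_eq_perWord rfl fun t ht hd => ?_⟩
        have := Nat.le_of_dvd (by omega) hd
        omega
    · obtain ⟨⟨hj, hb⟩, -⟩ := mem_modReps.1 hp
      obtain ⟨hb1, hb2⟩ := mem_newLetters.1 hb
      exact modWord_mem hn hL2 hj (mem_Ak_succ hb1 hb2)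

open Classical in
lemma cmpl_eq (hn : ∀ k, 2 ≤ n k) (ha : ∀ k, a k ≠ a (k + 1)) {K L : ℕ}
    (hL : Q n (K + 1) ≤ L) (hL2 : L ≤ Q n (K + 2)) :
    cmpl a n L = (phases a n K L).card + (modReps a n K L).card := by
  rw [cmpl, words_eq hn hL hL2, Set.ncard_coe_finset, Finset.card_union_of_disjoint,
    Finset.card_image_of_injOn, Finset.card_image_of_injOn (modWord_injOn hn ha hL hL2)]
  · intro s hs s' hs' h
    simp only [phases, Finset.coe_filter, Finset.mem_Icc, Set.mem_ofPred_eq] at hs hs'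
    have h1 : (s - 1) + 1 ≡ (s' - 1) + 1 [MOD Q n (K + 1)] := by
      rw [Nat.sub_add_cancel hs.1.1, Nat.sub_add_cancel hs'.1.1]
      exact perWord_inj hn ha hL h
    have := (Nat.ModEq.add_right_cancel' 1 h1).eq_of_lt_of_lt (by omega) (by omega)
    omega
  · rw [Finset.disjoint_left]
    intro u hu hu'
    obtain ⟨s, -, rfl⟩ := Finset.mem_image.1 hu
    obtain ⟨⟨j, b⟩, hp, h⟩ := Finset.mem_image.1 hu'
    obtain ⟨⟨hj, hb⟩, -⟩ := mem_modReps.1 hp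
    exact perWord_ne_modWord hn ha hL hL2 hj (mem_newLetters.1 hb).1 h.symm

open Classical in
lemma card_modReps (ha : ∀ k, a k ≠ a (k + 1)) (K L : ℕ) (hL : Q n (K + 1) ≤ L) :
    ((modReps a n K L).card : ℤ) = (((Ak a (K + 1)).ncard : ℤ) - 1) * L
      - (if a K ∈ Ak a (K + 1) then 1 else 0)
        * ((Q n (K + 1) - (L - Q n (K + 1) + Q n K) : ℕ) : ℤ) := by
  have hsub : Finset.Ico (L - Q n (K + 1) + Q n K) (Q n (K + 1)) ×ˢ
      {b ∈ newLetters a K | b = a K} ⊆ Finset.range L ×ˢ newLetters a K := by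
    apply Finset.product_subset_product
    · intro j hj
      simp only [Finset.mem_Ico, Finset.mem_range] at hj ⊢
      omega
    · exact Finset.filter_subset _ _
  have hmem : a (K + 1) ∈ (Ak a (K + 1)).toFinset := by
    rw [Set.mem_toFinset]; exact ⟨K + 1, le_rfl, rfl⟩
  have hcard : ((newLetters a K).card : ℤ) = ((Ak a (K + 1)).ncard : ℤ) - 1 := by
    rw [newLetters, Finset.cast_card_erase_of_mem hmem, Set.ncard_eq_toFinset_card']
  have hfil : (({b ∈ newLetters a K | b = a K} : Finset A).card : ℤ)
      = if a K ∈ Ak a (K + 1) then 1 else 0 := by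
    split_ifs with h
    · have : ({b ∈ newLetters a K | b = a K} : Finset A) = {a K} := by
        ext b
        simp only [Finset.mem_filter, mem_newLetters, Finset.mem_singleton]
        exact ⟨And.right, fun hb => ⟨hb ▸ ⟨ha K, h⟩, hb⟩⟩
      simp [this]
    · have : ({b ∈ newLetters a K | b = a K} : Finset A) = ∅ := by
        rw [Finset.filter_eq_empty_iff]
        rintro b hb rfl
        exact h (mem_newLetters.1 hb).2
      simp [this]
  rw [modReps, Finset.cast_card_sdiff hsub, Finset.card_product, Finset.card_product]
  push_cast [Finset.card_range, Nat.card_Ico]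
  rw [hcard, hfil]
  ring

end Toeplitz

/- STATEMENT 9: the complexity function for `k ≥ 1` with `n k > 2` on the range
`|p (k-1)| + 2 ≤ L ≤ |p k| + 1`. -/
open Classical in
theorem stmt9 {A : Type*} [Fintype A] [Nonempty A]
    (a : ℕ → A) (n : ℕ → ℕ) (hn : ∀ k, 2 ≤ n k) (ha : ∀ k, a k ≠ a (k + 1))
    (hAev : 2 ≤ (Aev a).ncard)
    (k : ℕ) (hk : 1 ≤ k) (hnk : 2 < n k) (L : ℕ)
    (hL1 : lenPrev a n k + 2 ≤ L) (hL2 : L ≤ (ToeplitzBlock a n k).length + 1) :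
    (cmpl a n L : ℤ) =
      ((lenPrev a n k : ℤ) + 1) + (((Ak a k).ncard : ℤ) - 1) * (L : ℤ)
        + (if L + lenPrev a n (k - 1) ≤ 2 * lenPrev a n k + 1 then
            (if a (k - 1) ∈ Ak a k then 1 else 0) *
              ((L : ℤ) - 2 * (lenPrev a n k : ℤ) + (lenPrev a n (k - 1) : ℤ) - 1)
          else if L + lenPrev a n k ≤ (ToeplitzBlock a n k).length then 0
          else -(if a k ∉ Ak a (k + 1) then 1 else 0) *
              ((L : ℤ) - ((ToeplitzBlock a n k).length : ℤ) + (lenPrev a n k : ℤ))) := by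
  obtain ⟨K, rfl⟩ : ∃ K, k = K + 1 := ⟨k - 1, by omega⟩
  have hq' := Q_pos hn K
  have hqq := two_mul_Q_le hn K
  have hN : 3 * Q n (K + 1) ≤ Q n (K + 1 + 1) := by
    have := Nat.mul_le_mul_left (Q n (K + 1)) hnk
    simp only [Q] at this ⊢
    linarith
  have hQ2 : Q n (K + 1 + 1) = Q n (K + 2) := rfl
  have hA2 : Ak a (K + 1 + 1) = Ak a (K + 2) := rfl
  rw [Nat.add_sub_cancel]
  simp only [lenPrev_eq hn, length_block hn, hQ2, hA2] at hL1 hL2 hN ⊢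
  rw [cmpl_eq hn ha (K := K) (by omega) (by omega)]
  push_cast
  rw [card_modReps ha K L (by omega), card_phases]
  generalize hX : (((Ak a (K + 1)).ncard : ℤ) - 1) * (L : ℤ) = X
  -- `3 * Q (K+1) ≤ Q (K+2)` keeps the two ranges with a correction term apart
  by_cases h1 : a K ∈ Ak a (K + 1) <;> by_cases h2 : a (K + 1) ∈ Ak a (K + 2) <;>
    simp only [h1, h2, if_true, if_false, not_true_eq_false, not_false_eq_true] <;>
    split_ifs <;> omega
end

section
/- For every k ≥ N0 + 1, regarding C(L)/L as a real number for L in the range |p_{k−1}| + 2 ≤ L ≤ |p_k| + 1: (i) for every such L one has C(L)/L ≥ min{#A_ev − (n_k − 1)/n_k, #A_ev − (n_{k−1} − 1)/n_{k−1}} > #A_ev − 1; (ii) the maximum of C(L)/L over this range equals #A_ev − (n_{k−1} − 1)/(2 n_{k−1} − 1), it is attained at L = 2|p_{k−1}| − |p_{k−2}| + 1, and it is at most #A_ev − 1/3. -/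
/-!
Write `q_l = n_0 ⋯ n_{l-1}`, so that `|p_k| + 1 = q_{k+1}`. The letter of every block at the
1-based position `j` is `a_l`, where `l` is least with `q_{l+1} ∤ j`. This rule makes sense on
`ℤ ∖ {0}`; the sequence `T c` completes it by the letter `c` at the origin. For `L ≤ q_{k+1}` a
window of length `L` contains at most one multiple of `q_{k+1}`, hence the words of length `L` are
exactly the windows of `T c` inside `(-q_{k+1}, q_{k+1})`, for `c ∈ A_{k+1}` (`mem_lang_iff`).

For `q_k < L ≤ q_{k+1}` and `k ≥ N0 + 1`, these words are counted exactly. Let `m = #A_ev`.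
The windows of `T (a_k)`, or those that miss the origin, are `q_k`-periodic and contribute `q_k`
words. Each of the `m - 1` letters `c ≠ a_k` contributes the `L` windows through the origin.
A window of length at least `2 q_l` determines its position modulo `q_l` (`recog`), and from this
the only coincidences are among the windows of `T (a_{k-1})` inside `(-q_k, q_k)`, which is a
`q_{k-1}`-periodic stretch (`short_of_not_dvd`). They cost `max (0, 2 q_k - q_{k-1} - L)` words, so
`C(L) = (m - 1) L + min (q_k, L - q_k + q_{k-1})` (`cmpl_formula`).

Thus `C(L) / L` increases up to `L = 2 q_k - q_{k-1}`, where the two terms of the minimum agree,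
and decreases afterwards; all claims follow from its values at `q_k`, at `2 q_k - q_{k-1}` and at
`q_{k+1}`, using `q_k = n_{k-1} q_{k-1}` and `q_{k+1} = n_k q_k`.
-/

open Filter

namespace Toep

/-- `Q n l = n 0 ⋯ n (l-1)`, so that `|p k| + 1 = Q n (k+1)` and `Q n 0 = 1` matches
`|p (-1)| + 1`. -/
def Q (n : ℕ → ℕ) (l : ℕ) : ℕ := ∏ i ∈ Finset.range l, n i

open Classical in
/-- The two-sided Toeplitz sequence with a free letter `c` at the origin: at `j ≠ 0` it carries
`a l`, where `l` is the least index such that `Q n (l+1)` does not divide `j`. -/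
noncomputable def T {A : Type*} (a : ℕ → A) (n : ℕ → ℕ) (c : A) (j : ℤ) : A :=
  if h : ∃ l, ¬ ((Q n (l + 1) : ℤ) ∣ j) then a (Nat.find h) else c

/-- The window of length `L` of `T a n c` that starts at position `s`. -/
noncomputable def W {A : Type*} (a : ℕ → A) (n : ℕ → ℕ) (c : A) (s : ℤ) (L : ℕ) : List A :=
  (List.range L).map fun i : ℕ => T a n c (s + (i : ℤ))

variable {A : Type*} {a : ℕ → A} {n : ℕ → ℕ}

/-! ### Divisibility of the block periods -/

lemma Q_zero : Q n 0 = 1 := by simp [Q]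

lemma Q_succ (l : ℕ) : Q n (l + 1) = Q n l * n l := by simp [Q, Finset.prod_range_succ]

lemma Q_pos (hn : ∀ k, 2 ≤ n k) (l : ℕ) : 0 < Q n l :=
  Finset.prod_pos fun i _ => by have := hn i; omega

lemma Q_double (hn : ∀ k, 2 ≤ n k) (l : ℕ) : 2 * Q n l ≤ Q n (l + 1) := by
  rw [Q_succ]; nlinarith [hn l, Q_pos hn l]

lemma Q_dvd {l m : ℕ} (h : l ≤ m) : (Q n l : ℤ) ∣ Q n m :=
  Int.natCast_dvd_natCast.mpr
    (Finset.prod_dvd_prod_of_subset _ _ _ (Finset.range_mono h))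

lemma Q_mono (hn : ∀ k, 2 ≤ n k) {l m : ℕ} (h : l ≤ m) : Q n l ≤ Q n m :=
  Nat.le_of_dvd (Q_pos hn m) (Int.natCast_dvd_natCast.mp (Q_dvd h))

lemma eq_zero_of_dvd {q j : ℤ} (h : q ∣ j) (h1 : -q < j) (h2 : j < q) : j = 0 :=
  Int.eq_zero_of_abs_lt_dvd h (abs_lt.mpr ⟨h1, h2⟩)

/-! ### The letters of the Toeplitz sequence -/

lemma T_zero (c : A) : T a n c 0 = c := by simp [T]

lemma T_level (c : A) {l : ℕ} {j : ℤ} (h1 : (Q n l : ℤ) ∣ j) (h2 : ¬ (Q n (l + 1) : ℤ) ∣ j) :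
    T a n c j = a l := by
  classical
  have h : ∃ l, ¬ ((Q n (l + 1) : ℤ) ∣ j) := ⟨l, h2⟩
  unfold T
  rw [dif_pos h]
  congr 1
  rw [Nat.find_eq_iff]
  refine ⟨h2, fun m hm => ?_⟩
  rw [not_not]
  exact (Q_dvd hm).trans h1

lemma exists_level {l : ℕ} {j : ℤ} (h : ¬ (Q n l : ℤ) ∣ j) :
    ∃ m, m < l ∧ (Q n m : ℤ) ∣ j ∧ ¬ (Q n (m + 1) : ℤ) ∣ j := by
  induction l with
  | zero => simp [Q_zero] at h
  | succ l ih =>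
    by_cases h' : (Q n l : ℤ) ∣ j
    · exact ⟨l, by omega, h', h⟩
    · obtain ⟨m, hm, h1⟩ := ih h'
      exact ⟨m, by omega, h1⟩

/-- Off the multiples of `Q n l` the sequence is `Q n l`-periodic and forgets the letter at the
origin. -/
lemma T_congr (c d : A) {l : ℕ} {j j' : ℤ} (h : ¬ (Q n l : ℤ) ∣ j) (hd : (Q n l : ℤ) ∣ j - j') :
    T a n c j = T a n d j' := by
  obtain ⟨m, hm, h1, h2⟩ := exists_level h
  have e1 : (Q n m : ℤ) ∣ j - j' := (Q_dvd hm.le).trans hd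
  have e2 : (Q n (m + 1) : ℤ) ∣ j - j' := (Q_dvd hm).trans hd
  rw [T_level c h1 h2, T_level d ((dvd_iff_dvd_of_dvd_sub e1).mp h1)
    (fun hdvd => h2 ((dvd_iff_dvd_of_dvd_sub e2).mpr hdvd))]

/-- At a nonzero multiple of `Q n l` inside `(-Q n (l+1), Q n (l+1))` the letter is `a l`. -/
lemma T_mid (c : A) {l : ℕ} {j : ℤ} (h : (Q n l : ℤ) ∣ j) (h0 : j ≠ 0)
    (h1 : -(Q n (l + 1) : ℤ) < j) (h2 : j < Q n (l + 1)) : T a n c j = a l :=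
  T_level c h fun hdvd => h0 (eq_zero_of_dvd hdvd h1 h2)

/-- With `a l` at the origin, the sequence is `Q n l`-periodic on `(-Q n (l+1), Q n (l+1))`. -/
lemma T_periodic {l : ℕ} {j j' : ℤ} (hd : (Q n l : ℤ) ∣ j - j')
    (h1 : -(Q n (l + 1) : ℤ) < j) (h2 : j < Q n (l + 1))
    (h1' : -(Q n (l + 1) : ℤ) < j') (h2' : j' < Q n (l + 1)) :
    T a n (a l) j = T a n (a l) j' := by
  have key : ∀ i : ℤ, (Q n l : ℤ) ∣ i → -(Q n (l + 1) : ℤ) < i → i < Q n (l + 1) →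
      T a n (a l) i = a l := by
    intro i hi hi1 hi2
    by_cases h0 : i = 0
    · rw [h0, T_zero]
    · exact T_mid _ hi h0 hi1 hi2
  by_cases h : (Q n l : ℤ) ∣ j
  · rw [key j h h1 h2, key j' ((dvd_iff_dvd_of_dvd_sub hd).mp h) h1' h2']
  · exact T_congr _ _ h hd

/-! ### Windows and blocks -/

lemma W_length (c : A) (s : ℤ) (L : ℕ) : (W a n c s L).length = L := by simp [W]

lemma W_eq_iff (c d : A) (s s' : ℤ) (L : ℕ) : W a n c s L = W a n d s' L ↔
    ∀ j : ℤ, s ≤ j → j < s + L → T a n c j = T a n d (j - s + s') := by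
  unfold W
  rw [List.map_inj_left]
  constructor
  · intro h j h1 h2
    have := h (j - s).toNat (by simp; omega)
    have e : ((j - s).toNat : ℤ) = j - s := Int.toNat_of_nonneg (by omega)
    rw [e] at this
    convert this using 2 <;> ring
  · intro h i hi
    have := h (s + i) (by omega) (by simp at hi; omega)
    rw [this]
    congr 1
    ring

lemma W_append (c : A) (s : ℤ) (L M : ℕ) :
    W a n c s (L + M) = W a n c s L ++ W a n c (s + L) M := by
  simp only [W, List.range_add, List.map_append, List.map_map]
  congr 1
  apply List.map_congr_left
  intro i _
  simp [add_assoc]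

lemma W_one (c : A) (s : ℤ) : W a n c s 1 = [T a n c s] := by simp [W]

lemma intercalate_replicate_succ (x : A) (p : List A) (m : ℕ) :
    List.intercalate [x] (List.replicate (m + 2) p) =
      p ++ [x] ++ List.intercalate [x] (List.replicate (m + 1) p) := by
  simp [List.intercalate, List.replicate_succ]

/-- The block `p k` is the window of the Toeplitz sequence on `[1, Q n (k+1))`. -/
lemma block_eq (hn : ∀ k, 2 ≤ n k) (c : A) (k : ℕ) :
    ToeplitzBlock a n k = W a n c 1 (Q n (k + 1) - 1) := by
  induction k with
  | zero =>
    have e : Q n (0 + 1) = n 0 := by rw [Q_succ, Q_zero, one_mul]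
    rw [ToeplitzBlock, e]
    symm
    rw [List.eq_replicate_iff]
    refine ⟨W_length _ _ _, fun b hb => ?_⟩
    simp only [W, List.mem_map, List.mem_range] at hb
    obtain ⟨i, hi, rfl⟩ := hb
    exact T_mid c (by simp [Q_zero]) (by omega) (by rw [e]; omega) (by rw [e]; omega)
  | succ k ih =>
    have hq := Q_pos hn (k + 1)
    -- Stated for runs of copies starting at any multiple of the period, so that peeling off the
    -- leftmost copy stays within the induction hypothesis.
    have key : ∀ m r : ℕ, r + m + 1 ≤ n (k + 1) →
        List.intercalate [a (k + 1)] (List.replicate (m + 1) (ToeplitzBlock a n k)) =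
          W a n c (1 + (r * Q n (k + 1) : ℕ)) ((m + 1) * Q n (k + 1) - 1) := by
      have hp : ∀ r : ℕ, ToeplitzBlock a n k =
          W a n c (1 + (r * Q n (k + 1) : ℕ)) (Q n (k + 1) - 1) := by
        intro r
        rw [ih, W_eq_iff]
        intro j h1 h2
        apply T_congr (l := k + 1)
        · intro h
          have := eq_zero_of_dvd h (by omega) (by omega)
          omega
        · push_cast
          exact ⟨-r, by ring⟩
      intro m
      induction m with
      | zero =>
        intro r _
        simp only [zero_add, one_mul]
        rw [← hp r]
        simp [List.intercalate]
      | succ m ihm =>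
        intro r hr
        rw [intercalate_replicate_succ, ihm (r + 1) (by omega)]
        have e : (m + 1 + 1) * Q n (k + 1) - 1
            = (Q n (k + 1) - 1) + 1 + ((m + 1) * Q n (k + 1) - 1) := by
          have : (m + 1 + 1) * Q n (k + 1) = (m + 1) * Q n (k + 1) + Q n (k + 1) := by ring
          have : Q n (k + 1) ≤ (m + 1) * Q n (k + 1) := Nat.le_mul_of_pos_left _ (by omega)
          omega
        rw [e, W_append, W_append, W_one, ← hp r]
        have hc : ((Q n (k + 1) - 1 : ℕ) : ℤ) = (Q n (k + 1) : ℤ) - 1 := by omega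
        have e2 : (1 : ℤ) + (r * Q n (k + 1) : ℕ) + (Q n (k + 1) - 1 : ℕ)
            = ((r + 1) * Q n (k + 1) : ℕ) := by rw [hc]; push_cast; ring
        have e3 : (1 : ℤ) + (r * Q n (k + 1) : ℕ) + (Q n (k + 1) - 1 + 1 : ℕ)
            = 1 + ((r + 1) * Q n (k + 1) : ℕ) := by
          rw [Nat.cast_add, hc]; push_cast; ring
        rw [e2, e3, T_mid c (l := k + 1)]
        · push_cast; exact ⟨r + 1, by ring⟩
        · positivity
        · have := Q_pos hn (k + 1 + 1)
          have : (0 : ℤ) ≤ ((r + 1) * Q n (k + 1) : ℕ) := by positivity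
          omega
        · rw [Q_succ (k + 1)]
          exact_mod_cast (by nlinarith : (r + 1) * Q n (k + 1) < Q n (k + 1) * n (k + 1))
    have h2 := hn (k + 1)
    have := key (n (k + 1) - 1) 0 (by omega)
    rw [Nat.sub_add_cancel (by omega)] at this
    rw [ToeplitzBlock, this, Q_succ (k + 1), mul_comm (n (k + 1))]
    simp

lemma block_length (hn : ∀ k, 2 ≤ n k) (k : ℕ) :
    (ToeplitzBlock a n k).length + 1 = Q n (k + 1) := by
  rw [block_eq hn (a 0), W_length]
  have := Q_pos hn (k + 1)
  omega

lemma lenPrev_eq (hn : ∀ k, 2 ≤ n k) (k : ℕ) : lenPrev a n k + 1 = Q n k := by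
  cases k with
  | zero => simp [lenPrev, Q_zero]
  | succ k => exact block_length hn k

lemma infix_W (c : A) (s : ℤ) (N : ℕ) {u : List A} (h : u <:+: W a n c s N) :
    ∃ s', s ≤ s' ∧ s' + u.length ≤ s + N ∧ u = W a n c s' u.length := by
  obtain ⟨x, y, hxy⟩ := h
  have hl := congrArg List.length hxy
  simp only [List.length_append, W_length] at hl
  refine ⟨s + x.length, by omega, by omega, ?_⟩
  rw [← hl, W_append, W_append] at hxy
  have := List.append_inj_left hxy (by simp [W_length])
  exact List.append_inj_right this (by simp [W_length])

lemma W_infix (c : A) {s s' : ℤ} {L N : ℕ} (h1 : s ≤ s') (h2 : s' + L ≤ s + N) :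
    W a n c s' L <:+: W a n c s N := by
  obtain ⟨x, hx⟩ := Int.eq_ofNat_of_zero_le (show 0 ≤ s' - s by omega)
  obtain ⟨y, hy⟩ := Int.eq_ofNat_of_zero_le (show 0 ≤ s + N - (s' + L) by omega)
  have : N = x + L + y := by omega
  subst this
  refine ⟨W a n c s x, W a n c (s + (x + L : ℕ)) y, ?_⟩
  rw [W_append, W_append]
  have : s' = s + x := by omega
  rw [this]

/-- The words of length at most `Q n (k+1)` are the factors of the words `p k c p k` with
`c ∈ A (k+1)`; these words are the windows of `T a n c` inside `(-Q n (k+1), Q n (k+1))`. -/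
lemma mem_lang_iff (hn : ∀ k, 2 ≤ n k) (k L : ℕ) (hL0 : 0 < L) (hL : L ≤ Q n (k + 1))
    (u : List A) :
    (u ∈ ToeplitzLang a n ∧ u.length = L) ↔
      ∃ c ∈ Ak a (k + 1), ∃ s : ℤ, -(Q n (k + 1) : ℤ) < s ∧ s + L ≤ Q n (k + 1) ∧
        u = W a n c s L := by
  have hq := Q_pos hn (k + 1)
  constructor
  · rintro ⟨⟨K, hK⟩, rfl⟩
    rw [block_eq hn (a (k + 1))] at hK
    obtain ⟨s, -, -, hs⟩ := infix_W _ _ _ hK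
    -- `j₀` is the last multiple of `Q n (k+1)` not beyond the end of the window; it is the only
    -- one that can lie inside.
    set e : ℤ := s + u.length - 1 with he
    set j₀ : ℤ := e - e % Q n (k + 1) with hj
    have hmod0 := Int.emod_nonneg e (b := (Q n (k + 1) : ℤ)) (by omega)
    have hmod1 := Int.emod_lt_of_pos e (b := (Q n (k + 1) : ℤ)) (by omega)
    have hdvd : (Q n (k + 1) : ℤ) ∣ j₀ := Int.dvd_self_sub_emod
    refine ⟨T a n (a (k + 1)) j₀, ?_, s - j₀, by omega, by omega, ?_⟩
    · by_cases hlev : ∃ l, ¬ ((Q n (l + 1) : ℤ) ∣ j₀)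
      · obtain ⟨l, hl⟩ := hlev
        obtain ⟨m, hm, h1, h2⟩ := exists_level hl
        refine ⟨m, ?_, (T_level _ h1 h2).symm⟩
        by_contra hlt
        exact h2 ((Q_dvd (by omega)).trans hdvd)
      · unfold T
        rw [dif_neg hlev]
        exact ⟨k + 1, le_rfl, rfl⟩
    · rw [hs, W_length, W_eq_iff]
      intro j h1 h2
      have e1 : j - s + (s - j₀) = j - j₀ := by ring
      rw [e1]
      by_cases hjj : j = j₀
      · rw [hjj, sub_self, T_zero]
      · apply T_congr (l := k + 1)
        · intro hd
          have := eq_zero_of_dvd (dvd_sub hd hdvd) (by omega) (by omega)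
          omega
        · simpa using hdvd
  · rintro ⟨c, ⟨m, hm, rfl⟩, s, h1, h2, rfl⟩
    refine ⟨⟨m, ?_⟩, W_length _ _ _⟩
    have hmono := Q_mono hn hm
    have hdbl := Q_double hn m
    have hqm := Q_pos hn m
    have : W a n (a m) s L = W a n (a 0) (s + Q n m) L := by
      rw [W_eq_iff]
      intro j hj1 hj2
      by_cases hj : j = 0
      · subst hj
        rw [T_zero, T_mid (l := m)]
        · ring_nf; exact dvd_refl _
        all_goals omega
      · apply T_congr (l := k + 1)
        · intro hd
          exact hj (eq_zero_of_dvd hd (by omega) (by omega))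
        · have : j - (j - s + (s + Q n m)) = -(Q n m : ℤ) := by ring
          rw [this, dvd_neg]
          exact Q_dvd hm
    rw [this, block_eq hn (a 0)]
    exact W_infix _ (by omega) (by omega)

/-! ### Recognizability -/

/-- A window of length at least `2 * Q n l` determines its starting position modulo `Q n l`. -/
lemma recog (hn : ∀ k, 2 ≤ n k) (ha : ∀ k, a k ≠ a (k + 1)) {c d : A} {s s' : ℤ} {L : ℕ}
    (h : W a n c s L = W a n d s' L) (l : ℕ) (hL : 2 * Q n l ≤ L) : (Q n l : ℤ) ∣ s - s' := by
  induction l with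
  | zero => simp [Q_zero]
  | succ l ih =>
    have hd := Q_double hn l
    have hd1 := Q_double hn (l + 1)
    have hq := Q_pos hn (l + 1)
    have ih := ih (by omega)
    rw [W_eq_iff] at h
    by_contra hnd
    -- A multiple of `Q n (l+1)` in the window that carries `a (l+1)`.
    obtain ⟨j, hj1, hj2, hj3, hj4⟩ : ∃ j : ℤ, s ≤ j ∧ j < s + L ∧ (Q n (l + 1) : ℤ) ∣ j ∧
        ¬ (Q n (l + 1 + 1) : ℤ) ∣ j := by
      set q : ℤ := (Q n (l + 1) : ℤ) with hqdef
      have hm0 := Int.emod_nonneg (s + L - 1) (b := q) (by omega)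
      have hm1 := Int.emod_lt_of_pos (s + L - 1) (b := q) (by omega)
      have hdv : q ∣ (s + L - 1) - (s + L - 1) % q := Int.dvd_self_sub_emod
      set e := (s + L - 1) - (s + L - 1) % q with he
      by_cases h4 : (Q n (l + 1 + 1) : ℤ) ∣ e
      · refine ⟨e - q, by omega, by omega, dvd_sub hdv dvd_rfl, fun h5 => ?_⟩
        have := eq_zero_of_dvd (dvd_sub h4 h5) (by omega) (by omega)
        omega
      · exact ⟨e, by omega, by omega, hdv, h4⟩
    have h5 := h j hj1 hj2
    rw [T_level c hj3 hj4] at h5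
    have e1 : (Q n l : ℤ) ∣ j - s + s' := by
      have := dvd_sub ((Q_dvd (Nat.le_succ l)).trans hj3) ih
      rwa [show j - s + s' = j - (s - s') by ring]
    have e2 : ¬ (Q n (l + 1) : ℤ) ∣ j - s + s' := by
      intro h6
      apply hnd
      have := dvd_sub hj3 h6
      rwa [show j - (j - s + s') = s - s' by ring] at this
    rw [T_level d e1 e2] at h5
    exact ha l h5.symm

/-- If a window of `T a n c` inside `(-Q n (k+2), Q n (k+2))` also occurs in some `T a n d` at an
offset that is not a multiple of `Q n (k+1)`, then it lies in `(-Q n (k+1), Q n (k+1))` and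
`c = a k`: each multiple of `Q n (k+1)` in the window must carry `a k`, and only the origin can. -/
lemma short_of_not_dvd (hn : ∀ k, 2 ≤ n k) (ha : ∀ k, a k ≠ a (k + 1)) {c d : A} {s s' : ℤ}
    {L k : ℕ} (h : W a n c s L = W a n d s' L) (hL1 : Q n (k + 1) < L)
    (h1 : -(Q n (k + 2) : ℤ) < s) (h2 : s + L ≤ Q n (k + 2))
    (hnd : ¬ (Q n (k + 1) : ℤ) ∣ s - s') :
    c = a k ∧ -(Q n (k + 1) : ℤ) < s ∧ s + L ≤ Q n (k + 1) := by
  have hd := Q_double hn k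
  have hq := Q_pos hn (k + 1)
  have hr := recog hn ha h k (by omega)
  rw [W_eq_iff] at h
  have letter : ∀ j : ℤ, s ≤ j → j < s + L → (Q n (k + 1) : ℤ) ∣ j → T a n c j = a k := by
    intro j hj1 hj2 hj3
    rw [h j hj1 hj2]
    apply T_level
    · have := dvd_sub ((Q_dvd (Nat.le_succ k)).trans hj3) hr
      rwa [show j - s + s' = j - (s - s') by ring]
    · intro h6
      apply hnd
      have := dvd_sub hj3 h6
      rwa [show j - (j - s + s') = s - s' by ring] at this
  have only : ∀ j : ℤ, s ≤ j → j < s + L → (Q n (k + 1) : ℤ) ∣ j → j = 0 := by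
    intro j hj1 hj2 hj3
    by_contra h0
    have e := letter j hj1 hj2 hj3
    rw [T_mid (l := k + 1) c hj3 h0 (by show -(Q n (k + 2) : ℤ) < j; omega)
      (by show j < (Q n (k + 2) : ℤ); omega)] at e
    exact ha k e.symm
  set q : ℤ := (Q n (k + 1) : ℤ) with hqdef
  have hm0 := Int.emod_nonneg (s + L - 1) (b := q) (by omega)
  have hm1 := Int.emod_lt_of_pos (s + L - 1) (b := q) (by omega)
  have hdv : q ∣ (s + L - 1) - (s + L - 1) % q := Int.dvd_self_sub_emod
  have e0 := only _ (by omega) (by omega) hdv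
  refine ⟨?_, ?_, by omega⟩
  · rw [← letter 0 (by omega) (by omega) (dvd_zero _), T_zero]
  · by_contra hlt
    have := only (-q) (by omega) (by omega) (by simp)
    omega

/-! ### Counting -/

open Classical in
/-- Starting positions of a system of representatives for the words of length `L` that are
windows of `T a n c`, where `q = Q n (k+1)` and `q' = Q n k`. For `c = a (k+1)` the sequence is
`q`-periodic, so one period suffices; for other `c` only windows through the origin are new, and
for `c = a k` the windows inside `(-q, q)` are `q'`-periodic, so only the last `q'` are kept. -/
noncomputable def reps (a : ℕ → A) (n : ℕ → ℕ) (k L : ℕ) (c : A) : Finset ℤ :=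
  if c = a (k + 1) then Finset.Ioc (-(Q n (k + 1) : ℤ)) 0
  else if c = a k then Finset.Ioc (-(L : ℤ)) 0 \
    Finset.Ioc (-(Q n (k + 1) : ℤ)) ((Q n (k + 1) : ℤ) - L - Q n k)
  else Finset.Ioc (-(L : ℤ)) 0

lemma reps_bounds {k L : ℕ} (hL1 : Q n (k + 1) < L) {c : A}
    {s : ℤ} (hs : s ∈ reps a n k L c) : -(L : ℤ) < s ∧ s ≤ 0 := by
  unfold reps at hs
  split_ifs at hs <;> simp at hs <;> omega

lemma reps_inj (hn : ∀ k, 2 ≤ n k) (ha : ∀ k, a k ≠ a (k + 1)) {c d : A} {s s' : ℤ}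
    {L k : ℕ} (hL1 : Q n (k + 1) < L) (hL2 : L ≤ Q n (k + 2))
    (hs : s ∈ reps a n k L c) (hs' : s' ∈ reps a n k L d)
    (h : W a n c s L = W a n d s' L) : c = d ∧ s = s' := by
  have b := reps_bounds hL1 hs
  have b' := reps_bounds hL1 hs'
  have hdbl := Q_double hn k
  have hdbl' := Q_double hn (k + 1)
  have hdbl'' : 2 * Q n (k + 1) ≤ Q n (k + 2) := hdbl'
  have hqk := Q_pos hn k
  -- When the positions are congruent modulo `Q n (k+1)`, a letter other than `a (k+1)` marks the
  -- origin; otherwise both windows lie in the periodic stretch around the origin.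
  by_cases hdv : (Q n (k + 1) : ℤ) ∣ s - s'
  · have mark : ∀ {c d : A} {s s' : ℤ}, -(L : ℤ) < s → s ≤ 0 → -(L : ℤ) < s' → s' ≤ 0 →
        (Q n (k + 1) : ℤ) ∣ s - s' → W a n c s L = W a n d s' L → c ≠ a (k + 1) →
        s = s' ∧ c = d := by
      intro c d s s' b1 b2 b3 b4 hdv h hc
      rw [W_eq_iff] at h
      have h0 := h 0 b2 (by omega)
      rw [T_zero] at h0
      by_cases hss : s = s'
      · subst hss
        simp only [zero_sub, neg_add_cancel, T_zero] at h0
        exact ⟨rfl, h0⟩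
      · exfalso
        apply hc
        rw [h0]
        apply T_mid (l := k + 1)
        · rw [show (0 : ℤ) - s + s' = -(s - s') by ring, dvd_neg]; exact hdv
        · omega
        · show -(Q n (k + 2) : ℤ) < _; omega
        · show _ < (Q n (k + 2) : ℤ); omega
    by_cases hc : c = a (k + 1)
    · by_cases hd : d = a (k + 1)
      · refine ⟨hc.trans hd.symm, ?_⟩
        rw [reps, if_pos hc, Finset.mem_Ioc] at hs
        rw [reps, if_pos hd, Finset.mem_Ioc] at hs'
        have := eq_zero_of_dvd hdv (by omega) (by omega)
        omega
      · have := mark b'.1 b'.2 b.1 b.2 (by rw [← neg_sub, dvd_neg]; exact hdv) h.symm hd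
        exact ⟨this.2.symm, this.1.symm⟩
    · exact (mark b.1 b.2 b'.1 b'.2 hdv h hc).symm
  · have x := short_of_not_dvd hn ha h hL1 (by omega) (by omega) hdv
    have hdv' : ¬ (Q n (k + 1) : ℤ) ∣ s' - s := by rwa [← neg_sub, dvd_neg]
    have x' := short_of_not_dvd hn ha h.symm hL1 (by omega) (by omega) hdv'
    refine ⟨x.1.trans x'.1.symm, ?_⟩
    rw [reps, if_neg (by rw [x.1]; exact ha k), if_pos x.1] at hs
    rw [reps, if_neg (by rw [x'.1]; exact ha k), if_pos x'.1] at hs'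
    simp only [Finset.mem_sdiff, Finset.mem_Ioc] at hs hs'
    have hr := recog hn ha h k (by omega)
    have := eq_zero_of_dvd hr (by omega) (by omega)
    omega

/-- Moves a starting position into the half-open interval `(b, b + q]` modulo `q`. -/
lemma exists_shift {q : ℤ} (hq : 0 < q) (s b : ℤ) : ∃ t, b < t ∧ t ≤ b + q ∧ q ∣ s - t := by
  refine ⟨b + 1 + (s - (b + 1)) % q, ?_, ?_, ?_⟩
  · have := Int.emod_nonneg (s - (b + 1)) hq.ne'
    omega
  · have := Int.emod_lt_of_pos (s - (b + 1)) hq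
    omega
  · have : q ∣ (s - (b + 1)) - (s - (b + 1)) % q := Int.dvd_self_sub_emod
    rwa [show s - (b + 1 + (s - (b + 1)) % q) = (s - (b + 1)) - (s - (b + 1)) % q by ring]

lemma reps_surj (hn : ∀ k, 2 ≤ n k) {c : A} {s : ℤ}
    {L k : ℕ} (hL1 : Q n (k + 1) < L) (hL2 : L ≤ Q n (k + 2))
    (h1 : -(Q n (k + 2) : ℤ) < s) (h2 : s + L ≤ Q n (k + 2)) :
    ∃ d t, (d = c ∨ d = a (k + 1)) ∧ t ∈ reps a n k L d ∧ W a n c s L = W a n d t L := by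
  have hdbl := Q_double hn k
  have hdbl'' : 2 * Q n (k + 1) ≤ Q n (k + 2) := Q_double hn (k + 1)
  have hqk := Q_pos hn k
  have periodic : W a n c s L = W a n (a (k + 1)) s L →
      ∃ d t, (d = c ∨ d = a (k + 1)) ∧ t ∈ reps a n k L d ∧ W a n c s L = W a n d t L := by
    intro he
    obtain ⟨t, ht1, ht2, ht3⟩ := exists_shift (q := (Q n (k + 1) : ℤ)) (by omega) s
      (-(Q n (k + 1) : ℤ))
    refine ⟨a (k + 1), t, Or.inr rfl, ?_, ?_⟩
    · rw [reps, if_pos rfl, Finset.mem_Ioc]; omega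
    · rw [he, W_eq_iff]
      intro j hj1 hj2
      apply T_periodic (l := k + 1)
      · rwa [show j - (j - s + t) = s - t by ring]
      · show -(Q n (k + 2) : ℤ) < _; omega
      · show _ < (Q n (k + 2) : ℤ); omega
      · show -(Q n (k + 2) : ℤ) < _; omega
      · show _ < (Q n (k + 2) : ℤ); omega
  by_cases hc : c = a (k + 1)
  · exact periodic (by rw [hc])
  by_cases hw : -(L : ℤ) < s ∧ s ≤ 0
  · by_cases hk : c = a k
    · by_cases hin : -(Q n (k + 1) : ℤ) < s ∧ s ≤ (Q n (k + 1) : ℤ) - L - Q n k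
      · obtain ⟨t, ht1, ht2, ht3⟩ := exists_shift (q := (Q n k : ℤ)) (by omega) s
          ((Q n (k + 1) : ℤ) - L - Q n k)
        refine ⟨c, t, Or.inl rfl, ?_, ?_⟩
        · rw [reps, if_neg hc, if_pos hk]
          simp only [Finset.mem_sdiff, Finset.mem_Ioc]
          omega
        · rw [hk, W_eq_iff]
          intro j hj1 hj2
          apply T_periodic (l := k)
          · rwa [show j - (j - s + t) = s - t by ring]
          all_goals omega
      · refine ⟨c, s, Or.inl rfl, ?_, rfl⟩
        rw [reps, if_neg hc, if_pos hk]
        simp only [Finset.mem_sdiff, Finset.mem_Ioc]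
        exact ⟨hw, hin⟩
    · refine ⟨c, s, Or.inl rfl, ?_, rfl⟩
      rw [reps, if_neg hc, if_neg hk, Finset.mem_Ioc]
      exact hw
  · -- The window misses the origin, so the letter there does not matter.
    apply periodic
    rw [W_eq_iff]
    intro j hj1 hj2
    apply T_congr (l := k + 2)
    · intro hd
      have := eq_zero_of_dvd hd (by omega) (by omega)
      omega
    · simp

lemma reps_card (hn : ∀ k, 2 ≤ n k) (ha : ∀ k, a k ≠ a (k + 1)) {L k : ℕ}
    (hL1 : Q n (k + 1) < L) (E : Finset A) (hk : a k ∈ E) (hk1 : a (k + 1) ∈ E) :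
    (∑ c ∈ E, (reps a n k L c).card) + (2 * Q n (k + 1) - Q n k - L)
      = Q n (k + 1) + (E.card - 1) * L := by
  classical
  have hdbl := Q_double hn k
  have hqk := Q_pos hn k
  have hk' : a k ∈ E.erase (a (k + 1)) := Finset.mem_erase.mpr ⟨ha k, hk⟩
  rw [← Finset.add_sum_erase E _ hk1, ← Finset.add_sum_erase _ _ hk']
  have c1 : (reps a n k L (a (k + 1))).card = Q n (k + 1) := by
    rw [reps, if_pos rfl, Int.card_Ioc]; omega
  have c2 : (reps a n k L (a k)).card = L - (2 * Q n (k + 1) - Q n k - L) := by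
    rw [reps, if_neg (ha k), if_pos rfl, Finset.card_sdiff_of_subset, Int.card_Ioc, Int.card_Ioc]
    · omega
    · intro x
      simp only [Finset.mem_Ioc]
      omega
  have c3 : ∀ c ∈ (E.erase (a (k + 1))).erase (a k), (reps a n k L c).card = L := by
    intro c hc
    simp only [Finset.mem_erase] at hc
    rw [reps, if_neg hc.2.1, if_neg hc.1, Int.card_Ioc]
    omega
  rw [Finset.sum_congr rfl c3, c1, c2, Finset.sum_const, Finset.card_erase_of_mem hk',
    Finset.card_erase_of_mem hk1, smul_eq_mul]
  have hcard : 2 ≤ E.card := by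
    have := Finset.card_pos.mpr ⟨_, hk'⟩
    rw [Finset.card_erase_of_mem hk1] at this
    omega
  obtain ⟨r, hr⟩ := Nat.exists_eq_add_of_le hcard
  rw [hr, show 2 + r - 1 - 1 = r by omega, show 2 + r - 1 = r + 1 by omega]
  have : (r + 1) * L = r * L + L := by ring
  omega

/-- The complexity on `(Q n (k+1), Q n (k+2)]`, in terms of `E = A_k = A_{k+2}`; the subtraction
of `L` is truncated. -/
lemma cmpl_formula (hn : ∀ k, 2 ≤ n k) (ha : ∀ k, a k ≠ a (k + 1)) {L k : ℕ}
    (hL1 : Q n (k + 1) < L) (hL2 : L ≤ Q n (k + 2)) (E : Finset A)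
    (hE0 : (E : Set A) = Ak a k) (hE : (E : Set A) = Ak a (k + 2)) :
    cmpl a n L + (2 * Q n (k + 1) - Q n k - L) = Q n (k + 1) + (E.card - 1) * L := by
  classical
  have hk : a k ∈ E := by
    rw [← Finset.mem_coe, hE0]; exact ⟨k, le_rfl, rfl⟩
  have hk1 : a (k + 1) ∈ E := by
    rw [← Finset.mem_coe, hE0]; exact ⟨k + 1, by omega, rfl⟩
  have hqk := Q_pos hn (k + 1)
  have hdbl'' : 2 * Q n (k + 1) ≤ Q n (k + 2) := Q_double hn (k + 1)
  rw [← reps_card hn ha hL1 E hk hk1, ← Finset.card_sigma]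
  congr 1
  have inj : Set.InjOn (fun x : (_ : A) × ℤ => W a n x.1 x.2 L)
      (E.sigma (reps a n k L) : Finset ((_ : A) × ℤ)) := by
    rintro ⟨c, s⟩ hx ⟨d, t⟩ hy hxy
    simp only [Finset.mem_coe, Finset.mem_sigma] at hx hy
    obtain ⟨rfl, rfl⟩ := reps_inj hn ha hL1 hL2 hx.2 hy.2 hxy
    rfl
  rw [← Set.ncard_coe_finset, ← inj.ncard_image, cmpl]
  congr 1
  ext u
  rw [Set.mem_ofPred_eq, mem_lang_iff hn (k + 1) L (by omega) hL2, Set.mem_image]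
  constructor
  · rintro ⟨c, hc, s, h1, h2, rfl⟩
    obtain ⟨d, t, hd, ht, he⟩ := reps_surj (c := c) hn hL1 hL2 h1 h2
    refine ⟨⟨d, t⟩, ?_, he.symm⟩
    rw [Finset.mem_coe, Finset.mem_sigma]
    refine ⟨?_, ht⟩
    rcases hd with rfl | rfl
    · rw [← Finset.mem_coe, hE]; exact hc
    · exact hk1
  · rintro ⟨⟨c, s⟩, hx, rfl⟩
    rw [Finset.mem_coe, Finset.mem_sigma] at hx
    have hb : -(L : ℤ) < s ∧ s ≤ 0 := reps_bounds hL1 hx.2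
    refine ⟨c, ?_, s, ?_, ?_, rfl⟩
    · have := hx.1
      rw [← Finset.mem_coe, hE] at this
      exact this
    · show -(Q n (k + 2) : ℤ) < s
      omega
    · show s + L ≤ (Q n (k + 2) : ℤ)
      omega

end Toep

/-- bounds for `C(L)/L` on the range `|p (k-1)| + 2 ≤ L ≤ |p k| + 1`
for `k ≥ N0 + 1`, and the exact maximum, attained at `L = 2|p (k-1)| - |p (k-2)| + 1`. -/
theorem stmt11 {A : Type*} [Fintype A] [Nonempty A]
    (a : ℕ → A) (n : ℕ → ℕ) (hn : ∀ k, 2 ≤ n k) (ha : ∀ k, a k ≠ a (k + 1))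
    (hAev : 2 ≤ (Aev a).ncard)
    (N0 : ℕ) (hN0 : IsLeast {N | ∀ k, N ≤ k → Ak a k = Aev a} N0)
    (k : ℕ) (hk : N0 + 1 ≤ k) :
    (∀ L : ℕ, lenPrev a n k + 2 ≤ L → L ≤ (ToeplitzBlock a n k).length + 1 →
      min (((Aev a).ncard : ℝ) - ((n k : ℝ) - 1) / (n k : ℝ))
          (((Aev a).ncard : ℝ) - ((n (k - 1) : ℝ) - 1) / (n (k - 1) : ℝ))
        ≤ (cmpl a n L : ℝ) / (L : ℝ)) ∧
    (((Aev a).ncard : ℝ) - 1 <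
      min (((Aev a).ncard : ℝ) - ((n k : ℝ) - 1) / (n k : ℝ))
          (((Aev a).ncard : ℝ) - ((n (k - 1) : ℝ) - 1) / (n (k - 1) : ℝ))) ∧
    (∀ L : ℕ, lenPrev a n k + 2 ≤ L → L ≤ (ToeplitzBlock a n k).length + 1 →
      (cmpl a n L : ℝ) / (L : ℝ)
        ≤ ((Aev a).ncard : ℝ) - ((n (k - 1) : ℝ) - 1) / (2 * (n (k - 1) : ℝ) - 1)) ∧
    (lenPrev a n k + 2 ≤ 2 * lenPrev a n k + 1 - lenPrev a n (k - 1) ∧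
      2 * lenPrev a n k + 1 - lenPrev a n (k - 1) ≤ (ToeplitzBlock a n k).length + 1 ∧
      (cmpl a n (2 * lenPrev a n k + 1 - lenPrev a n (k - 1)) : ℝ) /
          ((2 * lenPrev a n k + 1 - lenPrev a n (k - 1) : ℕ) : ℝ)
        = ((Aev a).ncard : ℝ) - ((n (k - 1) : ℝ) - 1) / (2 * (n (k - 1) : ℝ) - 1)) ∧
    (((Aev a).ncard : ℝ) - ((n (k - 1) : ℝ) - 1) / (2 * (n (k - 1) : ℝ) - 1)
      ≤ ((Aev a).ncard : ℝ) - 1 / 3) := by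
  classical
  obtain ⟨κ, rfl⟩ : ∃ κ, k = κ + 1 := ⟨k - 1, by omega⟩
  have hev : ∀ l, κ ≤ l → Ak a l = Aev a := fun l hl => hN0.1 l (by omega)
  set E : Finset A := (Aev a).toFinite.toFinset with hEdef
  have hE : (E : Set A) = Aev a := by simp [hEdef]
  have hcard : E.card = (Aev a).ncard := by rw [← hE, Set.ncard_coe_finset]
  have hform := fun (L : ℕ) (h1 : Toep.Q n (κ + 1) < L) (h2 : L ≤ Toep.Q n (κ + 2)) =>
    Toep.cmpl_formula hn ha h1 h2 E (by rw [hE, hev κ le_rfl]) (by rw [hE, hev _ (by omega)])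
  have hl1 : lenPrev a n (κ + 1) + 1 = Toep.Q n (κ + 1) := Toep.lenPrev_eq hn _
  have hl0 : lenPrev a n κ + 1 = Toep.Q n κ := Toep.lenPrev_eq hn _
  have hl2 : (ToeplitzBlock a n (κ + 1)).length + 1 = Toep.Q n (κ + 2) := Toep.block_length hn _
  have hq0 := Toep.Q_pos hn κ
  have hd0 := Toep.Q_double hn κ
  have hd1 : 2 * Toep.Q n (κ + 1) ≤ Toep.Q n (κ + 2) := Toep.Q_double hn (κ + 1)
  have hs0 : (Toep.Q n (κ + 1) : ℝ) = Toep.Q n κ * n κ := by exact_mod_cast Toep.Q_succ κ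
  have hs1 : (Toep.Q n (κ + 2) : ℝ) = Toep.Q n (κ + 1) * n (κ + 1) := by
    exact_mod_cast Toep.Q_succ (κ + 1)
  have hN : (2 : ℝ) ≤ n κ := by exact_mod_cast hn κ
  have hM : (2 : ℝ) ≤ n (κ + 1) := by exact_mod_cast hn (κ + 1)
  rw [hl2, show 2 * lenPrev a n (κ + 1) + 1 - lenPrev a n (κ + 1 - 1)
      = 2 * Toep.Q n (κ + 1) - Toep.Q n κ by rw [Nat.add_sub_cancel]; omega,
    show lenPrev a n (κ + 1) + 2 = Toep.Q n (κ + 1) + 1 by omega, Nat.add_sub_cancel]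
  rw [hcard] at hform
  set m := (Aev a).ncard with hm
  -- The two branches of the complexity formula over the reals.
  have hlow : ∀ L : ℕ, Toep.Q n (κ + 1) < L → L ≤ 2 * Toep.Q n (κ + 1) - Toep.Q n κ →
      (cmpl a n L : ℝ) = m * L - Toep.Q n (κ + 1) + Toep.Q n κ := by
    intro L h1 h2
    have h := hform L h1 (by omega)
    have h' : cmpl a n L + Toep.Q n (κ + 1) = (m - 1) * L + L + Toep.Q n κ := by omega
    have h3 : (m - 1) * L + L = m * L := by
      obtain ⟨r, hr⟩ := Nat.exists_eq_add_of_le hAev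
      rw [hr, show 2 + r - 1 = r + 1 by omega]; ring
    rw [h3] at h'
    have h4 : (cmpl a n L : ℝ) + Toep.Q n (κ + 1) = m * L + Toep.Q n κ := by exact_mod_cast h'
    linarith
  have hhigh : ∀ L : ℕ, L ≤ Toep.Q n (κ + 2) → 2 * Toep.Q n (κ + 1) - Toep.Q n κ ≤ L →
      (cmpl a n L : ℝ) = (m - 1) * L + Toep.Q n (κ + 1) := by
    intro L h1 h2
    have h := hform L (by omega) h1
    have h' : cmpl a n L = Toep.Q n (κ + 1) + (m - 1) * L := by omega
    rw [h']
    push_cast [Nat.cast_sub (show 1 ≤ m by omega)]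
    ring
  clear_value m E
  have hx : ((2 * Toep.Q n (κ + 1) - Toep.Q n κ : ℕ) : ℝ) = Toep.Q n κ * (2 * n κ - 1) := by
    rw [Nat.cast_sub (by omega)]; push_cast; rw [hs0]; ring
  have hq0' : (0 : ℝ) < Toep.Q n κ := by exact_mod_cast hq0
  have hNpos : (0 : ℝ) < n κ := by linarith
  have hMpos : (0 : ℝ) < n (κ + 1) := by linarith
  have hN1 : (0 : ℝ) < 2 * n κ - 1 := by linarith
  have hN2 : (n κ : ℝ) * 2 - 1 ≠ 0 := by linarith
  have eM : ((n (κ + 1) : ℝ) - 1) / n (κ + 1) = 1 - 1 / n (κ + 1) := by field_simp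
  have eN : ((n κ : ℝ) - 1) / n κ = 1 - 1 / n κ := by field_simp
  refine ⟨fun L h1 h2 => ?_, ?_, fun L h1 h2 => ?_, ⟨by omega, by omega, ?_⟩, ?_⟩
  · have hL0 : (0 : ℝ) < L := by exact_mod_cast (by omega : 0 < L)
    rcases le_total L (2 * Toep.Q n (κ + 1) - Toep.Q n κ) with h3 | h3
    · apply (min_le_right _ _).trans
      rw [le_div_iff₀ hL0, hlow L (by omega) h3]
      have hLq : (Toep.Q n (κ + 1) : ℝ) ≤ L := by exact_mod_cast (by omega)
      rw [hs0] at hLq ⊢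
      have : ((n κ : ℝ) - 1) / n κ * (Toep.Q n κ * n κ) ≤ ((n κ : ℝ) - 1) / n κ * L :=
        mul_le_mul_of_nonneg_left hLq (div_nonneg (by linarith) hNpos.le)
      have e : ((n κ : ℝ) - 1) / n κ * (Toep.Q n κ * n κ) = Toep.Q n κ * n κ - Toep.Q n κ := by
        field_simp
      linarith
    · apply (min_le_left _ _).trans
      rw [le_div_iff₀ hL0, hhigh L h2 h3, eM]
      have hLq : (L : ℝ) ≤ Toep.Q n (κ + 2) := by exact_mod_cast h2
      rw [hs1] at hLq
      have : (L : ℝ) / n (κ + 1) ≤ Toep.Q n (κ + 1) := by rwa [div_le_iff₀ hMpos]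
      have e : ((m : ℝ) - (1 - 1 / n (κ + 1))) * L = (m - 1) * L + L / n (κ + 1) := by ring
      linarith
  · rw [lt_min_iff, eM, eN]
    have : 0 < 1 / (n κ : ℝ) := by positivity
    have : 0 < 1 / (n (κ + 1) : ℝ) := by positivity
    constructor <;> linarith
  · have hL0 : (0 : ℝ) < L := by exact_mod_cast (by omega : 0 < L)
    rw [div_le_iff₀ hL0]
    rcases le_total L (2 * Toep.Q n (κ + 1) - Toep.Q n κ) with h3 | h3
    · rw [hlow L (by omega) h3, hs0]
      have hLq : (L : ℝ) ≤ Toep.Q n κ * (2 * n κ - 1) := by rw [← hx]; exact_mod_cast h3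
      have : ((n κ : ℝ) - 1) / (2 * n κ - 1) * L
          ≤ ((n κ : ℝ) - 1) / (2 * n κ - 1) * (Toep.Q n κ * (2 * n κ - 1)) :=
        mul_le_mul_of_nonneg_left hLq (div_nonneg (by linarith) hN1.le)
      have e : ((n κ : ℝ) - 1) / (2 * n κ - 1) * (Toep.Q n κ * (2 * n κ - 1))
          = (n κ - 1) * Toep.Q n κ := by
        field_simp
      linarith
    · rw [hhigh L h2 h3, hs0]
      have hLq : Toep.Q n κ * (2 * n κ - 1) ≤ (L : ℝ) := by rw [← hx]; exact_mod_cast h3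
      have : (n κ : ℝ) / (2 * n κ - 1) * (Toep.Q n κ * (2 * n κ - 1))
          ≤ (n κ : ℝ) / (2 * n κ - 1) * L :=
        mul_le_mul_of_nonneg_left hLq (div_nonneg hNpos.le hN1.le)
      have e : (n κ : ℝ) / (2 * n κ - 1) * (Toep.Q n κ * (2 * n κ - 1)) = n κ * Toep.Q n κ := by
        field_simp
      have e2 : ((n κ : ℝ) - 1) / (2 * n κ - 1) = 1 - n κ / (2 * n κ - 1) := by
        field_simp; ring
      rw [e2]
      linarith
  · rw [hhigh _ (by omega) le_rfl, hx, hs0]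
    field_simp
    ring
  · have : (1 : ℝ) / 3 ≤ ((n κ : ℝ) - 1) / (2 * n κ - 1) := by
      rw [div_le_div_iff₀ (by norm_num) hN1]; linarith
    linarith
end

section
/- The palindrome complexity of the simple Toeplitz subshift is given as follows. For 1 ≤ L ≤ |p_0|: P(L) = (#A_0 − 1)·(L mod 2) + 1. For k ≥ 1 and |p_{k−1}| + 1 ≤ L ≤ |p_k|, writing r := L mod (|p_{k−1}| + 1) and r̃ := L mod (|p_{k−2}| + 1): P(L) = (#A_k − 1)·(L mod 2) + ((|p_{k−1}| + 1 − r) mod 2) + (r mod 2)·c₁ + c₂ (arithmetic in ℤ), where c₁ = 1 if |p_{k−1}| + 1 ≤ L ≤ |p_k| − |p_{k−1}| − 1 and c₁ = 𝟙_{A_{k+1}}(a_k) if |p_k| − |p_{k−1}| ≤ L ≤ |p_k|, and where c₂ = 0 if a_{k−1} ∉ A_k or L > 2|p_{k−1}| − |p_{k−2}|, while c₂ = (r̃ mod 2) + ((|p_{k−2}| + 1 − r̃) mod 2) − (L mod 2) if a_{k−1} ∈ A_k and L ≤ 2|p_{k−1}| − |p_{k−2}|. -/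
/-!
Put `M k = n 0 ⋯ n (k-1) = |p (k-1)| + 1` and let the level `ν t` of an integer `t ≠ 0` be the least
`v` with `M (v+1) ∤ t`. The block `p k` is the sequence `t ↦ a (ν t)` on `0 < t < M (k+1)`
(`block_eq`), so the language consists of the windows of this sequence at positive positions
(`mem_lang_iff`), and statements about words become statements about divisibility. The symmetry
`ν (-t) = ν t` is the source of the palindromes.

Fix `M k ≤ L < M (k+1)`. A window of length `L` is made of copies of `p (k-1)` separated by letters
`a k`, at most one of which (at the multiple of `M (k+1)`) is replaced by a letter of `A_{k+1}`.
The key fact is `sync`: a word of length at least `M k` determines the positions of the copies of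
`p (k-1)` modulo `M k`, unless all the separating letters inside it are `a (k-1)`. Comparing a
palindrome with its reversal, there are therefore three kinds of palindromes (`classify_aligned`,
`classify_unaligned`):

* `hpal x`, centred on a separating letter `x`, for `L` odd. Here `x ∈ A_{k+1}`, or `x = a k` if
  `p k` contains a sufficiently long window around one of its letters `a k`;
* `vpal k`, centred on the centre of a copy of `p (k-1)`, with all separating letters equal to
  `a k`, for `L + M k` odd. It has to fit into `p k` unless `a k ∈ A_{k+1}`;
* `vpal (k-1)`, centred on the centre of a copy of `p (k-2)` inside `p (k-1) a_{k-1} p (k-1)`, for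
  `L + M (k-1)` odd. It requires `a (k-1) ∈ A_k` and `L ≤ 2|p (k-1)| - |p (k-2)|`.

Conversely all of these occur (`hpal_mem`, `hpal_mem'`, `vpal_mem`, `vpal_mem'`), and by `sync` they
are pairwise distinct. Counting them gives `palCmpl_eq`, and the stated formula follows by comparing
the parities of `L`, `M k` and `L % M k`.
-/

open Filter

namespace SimpleToeplitz

variable {A : Type*}

/-- `M n k = n 0 * ⋯ * n (k-1) = |p (k-1)| + 1`, as an integer; `M n 0 = 1`. -/
def M (n : ℕ → ℕ) (k : ℕ) : ℤ := ∏ i ∈ Finset.range k, (n i : ℤ)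

/-- The level of the integer `t ≠ 0`: the least `v` with `M n (v+1) ∤ t`.
At `t = 0` it has the junk value `0`. -/
noncomputable def nu (n : ℕ → ℕ) (t : ℤ) : ℕ := sInf {v : ℕ | ¬ M n (v + 1) ∣ t}

/-- The Toeplitz sequence, indexed by nonzero integers: the block `p k` is its restriction
to `0 < t < M n (k+1)`. -/
noncomputable def tz (a : ℕ → A) (n : ℕ → ℕ) (t : ℤ) : A := a (nu n t)

/-- The word `f s, f (s+1), …, f (s+L-1)`. -/
def wd (f : ℤ → A) (s : ℤ) (L : ℕ) : List A := (List.range L).map fun i : ℕ => f (s + i)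

/-! ### The moduli and the level function -/

lemma M_succ (n : ℕ → ℕ) (k : ℕ) : M n (k + 1) = M n k * n k := by
  simp [M, Finset.prod_range_succ]

lemma M_zero (n : ℕ → ℕ) : M n 0 = 1 := by simp [M]

lemma M_pos {n : ℕ → ℕ} (hn : ∀ k, 2 ≤ n k) (k : ℕ) : 0 < M n k := by
  refine Finset.prod_pos fun i _ => ?_
  have := hn i
  omega

lemma two_M_le {n : ℕ → ℕ} (hn : ∀ k, 2 ≤ n k) (k : ℕ) : 2 * M n k ≤ M n (k + 1) := by
  have h1 := M_pos hn k
  have h2 : (2 : ℤ) ≤ n k := by exact_mod_cast hn k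
  rw [M_succ]
  nlinarith

lemma M_dvd {n : ℕ → ℕ} {j k : ℕ} (h : j ≤ k) : M n j ∣ M n k :=
  Finset.prod_dvd_prod_of_subset _ _ _ (by simpa using h)

lemma M_le {n : ℕ → ℕ} (hn : ∀ k, 2 ≤ n k) {j k : ℕ} (h : j ≤ k) : M n j ≤ M n k :=
  Int.le_of_dvd (M_pos hn k) (M_dvd h)

lemma lt_M {n : ℕ → ℕ} (hn : ∀ k, 2 ≤ n k) (k : ℕ) : (k : ℤ) < M n k := by
  induction k with
  | zero => simp [M]
  | succ k ih =>
    have := two_M_le hn k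
    push_cast
    omega

/-- A nonzero multiple of `m` is at least `m` in absolute value. -/
lemma eq_zero_of_small {m t : ℤ} (h : m ∣ t) (h1 : -m < t) (h2 : t < m) : t = 0 :=
  Int.eq_zero_of_abs_lt_dvd h (abs_lt.2 ⟨h1, h2⟩)

lemma exists_not_dvd {n : ℕ → ℕ} (hn : ∀ k, 2 ≤ n k) {t : ℤ} (ht : t ≠ 0) :
    ∃ v, ¬ M n (v + 1) ∣ t := by
  refine ⟨t.natAbs, fun h => ht ?_⟩
  have := lt_M hn (t.natAbs + 1)
  exact eq_zero_of_small h (by omega) (by omega)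

lemma nu_spec {n : ℕ → ℕ} (hn : ∀ k, 2 ≤ n k) {t : ℤ} (ht : t ≠ 0) : ¬ M n (nu n t + 1) ∣ t :=
  Nat.sInf_mem (s := {v : ℕ | ¬ M n (v + 1) ∣ t}) (exists_not_dvd hn ht)

lemma M_nu_dvd {n : ℕ → ℕ} (t : ℤ) : M n (nu n t) ∣ t := by
  rcases h : nu n t with _ | v
  · simp [M]
  · by_contra hv
    have : nu n t ≤ v := Nat.sInf_le hv
    omega

lemma nu_eq {n : ℕ → ℕ} {t : ℤ} {k : ℕ} (h1 : M n k ∣ t)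
    (h2 : ¬ M n (k + 1) ∣ t) : nu n t = k := by
  refine le_antisymm (Nat.sInf_le h2) ?_
  refine le_csInf ⟨k, h2⟩ fun v hv => ?_
  by_contra hlt
  exact hv ((M_dvd (by omega)).trans h1)

lemma le_nu {n : ℕ → ℕ} (hn : ∀ k, 2 ≤ n k) {t : ℤ} (ht : t ≠ 0) {k : ℕ} (h : M n k ∣ t) :
    k ≤ nu n t := by
  by_contra hlt
  exact nu_spec hn ht ((M_dvd (by omega)).trans h)

lemma nu_shift {n : ℕ → ℕ} (hn : ∀ k, 2 ≤ n k) {t t' : ℤ} {k : ℕ} (h : ¬ M n k ∣ t)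
    (h' : M n k ∣ t' - t) : nu n t' = nu n t := by
  have ht : t ≠ 0 := by rintro rfl; exact h (dvd_zero _)
  have hk : nu n t < k := by
    by_contra hle
    exact h ((M_dvd (by omega)).trans (M_nu_dvd t))
  apply nu_eq
  · exact (dvd_iff_dvd_of_dvd_sub ((M_dvd hk.le).trans h')).2 (M_nu_dvd t)
  · rw [dvd_iff_dvd_of_dvd_sub ((M_dvd hk).trans h')]
    exact nu_spec hn ht

lemma nu_neg {n : ℕ → ℕ} (t : ℤ) : nu n (-t) = nu n t := by
  simp [nu, dvd_neg]

lemma tz_neg (a : ℕ → A) {n : ℕ → ℕ} (t : ℤ) : tz a n (-t) = tz a n t := by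
  simp [tz, nu_neg]

lemma tz_eq {a : ℕ → A} {n : ℕ → ℕ} {t : ℤ} {k : ℕ} (h1 : M n k ∣ t)
    (h2 : ¬ M n (k + 1) ∣ t) : tz a n t = a k := by
  rw [tz, nu_eq h1 h2]

lemma tz_shift {a : ℕ → A} {n : ℕ → ℕ} (hn : ∀ k, 2 ≤ n k) {t t' : ℤ} {k : ℕ} (h : ¬ M n k ∣ t)
    (h' : M n k ∣ t' - t) : tz a n t' = tz a n t := by
  rw [tz, tz, nu_shift hn h h']

lemma tz_mem {a : ℕ → A} {n : ℕ → ℕ} (hn : ∀ k, 2 ≤ n k) {t : ℤ} (ht : t ≠ 0) {k : ℕ}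
    (h : M n k ∣ t) : tz a n t ∈ Ak a k :=
  ⟨nu n t, le_nu hn ht h, rfl⟩

lemma not_dvd_M {n : ℕ → ℕ} (hn : ∀ k, 2 ≤ n k) (k : ℕ) : ¬ M n (k + 1) ∣ M n k := fun h => by
  have h1 := Int.le_of_dvd (M_pos hn k) h
  have := two_M_le hn k
  have := M_pos hn k
  omega

/-! ### Words as windows of the Toeplitz sequence -/

lemma wd_length (f : ℤ → A) (s : ℤ) (L : ℕ) : (wd f s L).length = L := by simp [wd]

lemma wd_eq_iff {f g : ℤ → A} {s t : ℤ} {L : ℕ} :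
    wd f s L = wd g t L ↔ ∀ i : ℕ, i < L → f (s + i) = g (t + i) := by
  simp [wd]

lemma wd_append (f : ℤ → A) (s : ℤ) (L L' : ℕ) :
    wd f s (L + L') = wd f s L ++ wd f (s + L) L' := by
  simp [wd, List.range_add, Function.comp_def, add_assoc]

lemma wd_reverse (f : ℤ → A) (s : ℤ) (L : ℕ) :
    (wd f s L).reverse = wd (fun t => f (-t)) (-(s + L - 1)) L := by
  apply List.ext_getElem
  · simp [wd]
  · intro i h1 h2
    simp only [wd, List.length_reverse, List.length_map, List.length_range] at h1
    simp only [wd, List.getElem_reverse, List.length_map, List.length_range, List.getElem_map,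
      List.getElem_range]
    congr 1
    omega

lemma eq_wd_of_append {f : ℤ → A} {s : ℤ} {L : ℕ} {l u r : List A} (h : l ++ u ++ r = wd f s L) :
    u = wd f (s + l.length) u.length := by
  have hL : L = l.length + u.length + r.length := by
    have := congrArg List.length h
    simp [wd] at this
    omega
  subst hL
  rw [wd_append, wd_append] at h
  have h1 := (List.append_inj h (by simp [wd])).1
  exact (List.append_inj h1 (by simp [wd])).2

lemma intercalate_eq {a : ℕ → A} {n : ℕ → ℕ} (hn : ∀ k, 2 ≤ n k) (k N : ℕ)
    (hN : (N : ℤ) + 1 = M n k) (r : ℕ) (hr : r + 1 ≤ n k) :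
    List.intercalate [a k] (List.replicate (r + 1) (wd (tz a n) 1 N)) =
      wd (tz a n) 1 (r * (N + 1) + N) := by
  induction r with
  | zero => simp
  | succ r ih =>
    have ih := ih (by omega)
    rw [List.replicate_succ, List.intercalate_cons_of_ne_nil (by simp), ih]
    have e : (r + 1) * (N + 1) + N = N + (1 + (r * (N + 1) + N)) := by ring
    have hM1 : (M n k) < M n (k + 1) := by
      have := two_M_le hn k
      have := M_pos hn k
      omega
    rw [e, wd_append _ _ N, wd_append _ _ 1, List.append_assoc]
    congr 2
    · have : (1 : ℤ) + N = M n k := by omega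
      simp [wd, this, tz_eq (dvd_refl _) (not_dvd_M hn k)]
    · rw [wd_eq_iff]
      intro i hi
      have hb : M n k * (r + 2) ≤ M n (k + 1) := by
        rw [M_succ]
        have := M_pos hn k
        have : (r : ℤ) + 2 ≤ n k := by exact_mod_cast hr
        nlinarith
      have hi' : (i : ℤ) + 1 < M n k * (r + 1) := by
        rw [← hN]
        have : (i : ℤ) < r * (N + 1) + N := by exact_mod_cast hi
        nlinarith
      have e2 : (1 : ℤ) + N + (1 : ℕ) + i = M n k + (1 + i) := by push_cast; omega
      rw [e2]
      by_cases hd : M n k ∣ 1 + (i : ℤ)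
      · rw [tz_eq hd, tz_eq (k := k)]
        · exact dvd_add_right (dvd_refl _) |>.2 hd
        · intro h
          have := Int.le_of_dvd (by have := M_pos hn k; omega) h
          nlinarith
        · intro h
          have := Int.le_of_dvd (by omega) h
          have := M_pos hn k
          nlinarith
      · exact (tz_shift hn hd (by simp)).symm

lemma block_eq {a : ℕ → A} {n : ℕ → ℕ} (hn : ∀ k, 2 ≤ n k) (k : ℕ) :
    ToeplitzBlock a n k = wd (tz a n) 1 (M n (k + 1) - 1).toNat := by
  induction k with
  | zero =>
    have h := intercalate_eq (a := a) hn 0 0 (by simp [M]) (n 0 - 1) (by have := hn 0; omega)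
    have e : (M n (0 + 1) - 1).toNat = n 0 - 1 := by simp [M]
    rw [e]
    simp only [ToeplitzBlock]
    simp only [wd, List.range_zero, List.map_nil] at h ⊢
    symm
    rw [List.eq_replicate_iff]
    refine ⟨by simp, ?_⟩
    simp only [List.mem_map, List.mem_range]
    rintro b ⟨i, hi, rfl⟩
    refine tz_eq (by simp [M]) fun h => ?_
    have := Int.le_of_dvd (by omega) h
    simp [M] at this
    omega
  | succ k ih =>
    have hp := M_pos hn (k + 1)
    have h := intercalate_eq (a := a) hn (k + 1) (M n (k + 1) - 1).toNat (by omega)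
      (n (k + 1) - 1) (by have := hn (k + 1); omega)
    rw [← ih, Nat.sub_add_cancel (by have := hn (k + 1); omega)] at h
    rw [ToeplitzBlock, h]
    congr 1
    zify
    have hn1 := hn (k + 1)
    have hp2 := M_pos hn (k + 1 + 1)
    rw [Int.toNat_of_nonneg (by omega), Int.toNat_of_nonneg (by omega), M_succ n (k + 1)]
    push_cast [Nat.cast_sub (show 1 ≤ n (k + 1) by omega)]
    ring

lemma block_length {a : ℕ → A} {n : ℕ → ℕ} (hn : ∀ k, 2 ≤ n k) (k : ℕ) :
    ((ToeplitzBlock a n k).length : ℤ) + 1 = M n (k + 1) := by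
  have := M_pos hn (k + 1)
  rw [block_eq hn, wd_length]
  omega

lemma lenPrev_eq {a : ℕ → A} {n : ℕ → ℕ} (hn : ∀ k, 2 ≤ n k) (k : ℕ) :
    (lenPrev a n k : ℤ) + 1 = M n k := by
  cases k with
  | zero => simp [lenPrev, M]
  | succ k => exact block_length hn k

lemma mem_lang_iff {a : ℕ → A} {n : ℕ → ℕ} (hn : ∀ k, 2 ≤ n k) {u : List A} :
    u ∈ ToeplitzLang a n ↔ ∃ t : ℤ, 1 ≤ t ∧ u = wd (tz a n) t u.length := by
  constructor
  · rintro ⟨k, l, r, h⟩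
    rw [block_eq hn] at h
    exact ⟨1 + l.length, by omega, eq_wd_of_append h⟩
  · rintro ⟨t, ht, h⟩
    obtain ⟨d, rfl⟩ : ∃ d : ℕ, t = 1 + d := ⟨(t - 1).toNat, by omega⟩
    refine ⟨d + u.length, ?_⟩
    rw [block_eq hn]
    have := lt_M hn (d + u.length + 1)
    obtain ⟨e, he⟩ : ∃ e : ℕ, (M n (d + u.length + 1) - 1).toNat = d + u.length + e :=
      ⟨(M n (d + u.length + 1) - 1).toNat - (d + u.length), by omega⟩
    rw [he, wd_append, wd_append, ← h]
    exact ⟨_, _, rfl⟩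

/-! ### Synchronisation -/

/-- `f` agrees with the Toeplitz sequence off the multiples of `M n k`, that is, `f` consists of
copies of `p (k-1)` separated by arbitrary letters. -/
def Grid (a : ℕ → A) (n : ℕ → ℕ) (k : ℕ) (f : ℤ → A) : Prop :=
  ∀ t, ¬ M n k ∣ t → f t = tz a n t

lemma Grid.mono {a : ℕ → A} {n : ℕ → ℕ} {j k : ℕ} (h : j ≤ k) {f : ℤ → A} (hf : Grid a n k f) :
    Grid a n j f := fun t ht => hf t fun hd => ht ((M_dvd h).trans hd)

lemma grid_tz (a : ℕ → A) (n : ℕ → ℕ) (k : ℕ) : Grid a n k (tz a n) := fun _ _ => rfl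

/-- Every window of length at least `m` contains a multiple of `m`. -/
lemma exists_dvd_add {m : ℤ} (hm : 0 < m) (s : ℤ) : ∃ i : ℕ, (i : ℤ) < m ∧ m ∣ s + i := by
  refine ⟨((-s) % m).toNat, ?_, ?_⟩
  · have := Int.emod_lt_of_pos (-s) hm
    have := Int.emod_nonneg (-s) hm.ne'
    omega
  · rw [Int.toNat_of_nonneg (Int.emod_nonneg _ hm.ne')]
    refine (dvd_neg.2 (Int.dvd_self_sub_emod (x := -s) (m := m))).trans ?_
    rw [show -(-s - -s % m) = s + -s % m by ring]

/-- Two occurrences of a word of length at least `|p k| + 1` in grids of copies of `p k` are either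
aligned, or all the separating letters inside the word are the letter `a k`, so that the word
has the finer period `|p (k-1)| + 1`. -/
lemma sync {a : ℕ → A} {n : ℕ → ℕ} (hn : ∀ k, 2 ≤ n k) (ha : ∀ k, a k ≠ a (k + 1)) (k : ℕ)
    {f g : ℤ → A} (hf : Grid a n (k + 1) f) (hg : Grid a n (k + 1) g) {s s' : ℤ} {L : ℕ}
    (hL : M n (k + 1) ≤ L) (h : ∀ i : ℕ, i < L → f (s + i) = g (s' + i))
    (hs : ¬ M n (k + 1) ∣ s - s') :
    M n k ∣ s - s' ∧ ∀ i : ℕ, i < L → M n (k + 1) ∣ s + i → f (s + i) = a k := by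
  induction k with
  | zero =>
    refine ⟨by simp [M], fun i hi hd => ?_⟩
    have hd' : ¬ M n (0 + 1) ∣ s' + i := fun h' => hs (by
      have := dvd_sub hd h'
      rwa [add_sub_add_right_eq_sub] at this)
    rw [h i hi, hg _ hd', tz_eq (by simp [M]) hd']
  | succ k ih =>
    have key : M n (k + 1) ∣ s - s' := by
      by_contra hs1
      have h2 := two_M_le hn (k + 1)
      have hp := M_pos hn (k + 1)
      have ih := (ih (hf.mono (by omega)) (hg.mono (by omega)) (by omega) hs1).2
      -- among two consecutive multiples of `M n (k+1)` one is not a multiple of `M n (k+2)`,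
      -- and there the word has the letter `a (k+1)`
      obtain ⟨i, hi, hd, hnd⟩ : ∃ i : ℕ, i < L ∧ M n (k + 1) ∣ s + i ∧ ¬ M n (k + 1 + 1) ∣ s + i := by
        obtain ⟨i, hi, hd⟩ := exists_dvd_add hp s
        by_cases hd2 : M n (k + 1 + 1) ∣ s + i
        · refine ⟨i + (M n (k + 1)).toNat, by omega, ?_, fun hd3 => ?_⟩
          · rw [Nat.cast_add, Int.toNat_of_nonneg hp.le, ← add_assoc]
            exact dvd_add hd (dvd_refl _)
          · rw [Nat.cast_add, Int.toNat_of_nonneg hp.le, ← add_assoc] at hd3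
            exact not_dvd_M hn (k + 1) ((dvd_add_right hd2).1 hd3)
        · exact ⟨i, by omega, hd, hd2⟩
      have h1 := ih i hi hd
      rw [hf _ hnd, tz_eq hd hnd] at h1
      exact ha k h1.symm
    refine ⟨key, fun i hi hd => ?_⟩
    have hd' : ¬ M n (k + 1 + 1) ∣ s' + i := fun h' => hs (by
      have := dvd_sub hd h'
      rwa [add_sub_add_right_eq_sub] at this)
    have hd1 : M n (k + 1) ∣ s' + i := by
      have h1 := dvd_sub ((M_dvd (by omega)).trans hd) key
      rwa [show s + (i : ℤ) - (s - s') = s' + i by ring] at h1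
    rw [h i hi, hg _ hd', tz_eq hd1 hd']

/-! ### The two families of palindromes -/

/-- The symmetric sequence with the letter `x` at the origin and the Toeplitz sequence elsewhere. -/
noncomputable def hfun (a : ℕ → A) (n : ℕ → ℕ) (x : A) (t : ℤ) : A :=
  if t = 0 then x else tz a n t

/-- The periodic sequence `⋯ p (k-1) a_k p (k-1) a_k p (k-1) ⋯` with the letters `a_k`
at the multiples of `M n k`. -/
noncomputable def vfun (a : ℕ → A) (n : ℕ → ℕ) (k : ℕ) (t : ℤ) : A :=
  if M n k ∣ t then a k else tz a n t

/-- For odd `L`, the palindrome of length `L` centred at the origin of `hfun a n x`. -/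
noncomputable def hpal (a : ℕ → A) (n : ℕ → ℕ) (L : ℕ) (x : A) : List A :=
  wd (hfun a n x) (-((L : ℤ) - 1) / 2) L

/-- For `L + M n k` odd, the palindrome of length `L` in `vfun a n k` centred at the centre of a
copy of `p (k-1)`, i.e. at the (half-)integer `M n k / 2`. -/
noncomputable def vpal (a : ℕ → A) (n : ℕ → ℕ) (L k : ℕ) : List A :=
  wd (vfun a n k) ((M n k - L + 1) / 2) L

lemma grid_hfun (a : ℕ → A) (n : ℕ → ℕ) (x : A) (k : ℕ) : Grid a n k (hfun a n x) := by
  intro t ht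
  rw [hfun, if_neg]
  rintro rfl
  exact ht (dvd_zero _)

lemma grid_vfun (a : ℕ → A) (n : ℕ → ℕ) (k : ℕ) : Grid a n k (vfun a n k) := fun t ht => by
  rw [vfun, if_neg ht]

lemma hfun_neg (a : ℕ → A) (n : ℕ → ℕ) (x : A) (t : ℤ) : hfun a n x (-t) = hfun a n x t := by
  simp [hfun, tz_neg]

lemma vfun_neg (a : ℕ → A) (n : ℕ → ℕ) (k : ℕ) (t : ℤ) : vfun a n k (-t) = vfun a n k t := by
  simp [vfun, tz_neg]

lemma vfun_shift {a : ℕ → A} {n : ℕ → ℕ} (hn : ∀ k, 2 ≤ n k) {k : ℕ} {t t' : ℤ}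
    (h : M n k ∣ t' - t) : vfun a n k t' = vfun a n k t := by
  by_cases hd : M n k ∣ t
  · rw [vfun, vfun, if_pos hd, if_pos ((dvd_iff_dvd_of_dvd_sub h).2 hd)]
  · rw [vfun, vfun, if_neg hd, if_neg fun hd' => hd ((dvd_iff_dvd_of_dvd_sub h).1 hd'),
      tz_shift hn hd h]

lemma hpal_reverse {a : ℕ → A} {n : ℕ → ℕ} {L : ℕ} (hL : L % 2 = 1) (x : A) :
    (hpal a n L x).reverse = hpal a n L x := by
  rw [hpal, wd_reverse, wd_eq_iff]
  intro i _
  simp only [hfun_neg]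
  congr 1
  omega

lemma vpal_reverse {a : ℕ → A} {n : ℕ → ℕ} (hn : ∀ k, 2 ≤ n k) {L k : ℕ}
    (hL : (L + M n k) % 2 = 1) : (vpal a n L k).reverse = vpal a n L k := by
  rw [vpal, wd_reverse, wd_eq_iff]
  intro i _
  simp only [vfun_neg]
  refine vfun_shift hn ⟨-1, ?_⟩
  omega

lemma hpal_inj {a : ℕ → A} {n : ℕ → ℕ} {L : ℕ} (hL : L % 2 = 1) {x y : A}
    (h : hpal a n L x = hpal a n L y) : x = y := by
  have h1 := wd_eq_iff.1 h ((L - 1) / 2) (by omega)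
  rw [show -((L : ℤ) - 1) / 2 + ((L - 1) / 2 : ℕ) = 0 by omega] at h1
  simpa [hfun] using h1

/-- In `vfun a n j` the separating letters are `a j`, and not `a (j-1)`: a long window of it can only
occur in an aligned position. -/
lemma vfun_sync {a : ℕ → A} {n : ℕ → ℕ} (hn : ∀ k, 2 ≤ n k) (ha : ∀ k, a k ≠ a (k + 1)) {j : ℕ}
    {g : ℤ → A} (hg : Grid a n j g) {s s' : ℤ} {L : ℕ} (hL : M n j ≤ L)
    (h : wd (vfun a n j) s L = wd g s' L) : M n j ∣ s - s' := by
  cases j with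
  | zero => simp [M]
  | succ j =>
    by_contra hs
    have h1 := (sync hn ha j (grid_vfun a n (j + 1)) hg hL (wd_eq_iff.1 h) hs).2
    obtain ⟨i, hi, hd⟩ := exists_dvd_add (M_pos hn (j + 1)) s
    have h2 := h1 i (by omega) hd
    rw [vfun, if_pos hd] at h2
    exact ha j h2.symm

lemma vpal_ne_hpal {a : ℕ → A} {n : ℕ → ℕ} (hn : ∀ k, 2 ≤ n k) (ha : ∀ k, a k ≠ a (k + 1))
    {L j : ℕ} (hL : M n j ≤ L) (h1 : L % 2 = 1) (h2 : (L + M n j) % 2 = 1) (x : A) :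
    vpal a n L j ≠ hpal a n L x := by
  intro h
  obtain ⟨c, hc⟩ := vfun_sync hn ha (grid_hfun a n x j) hL h
  have hp := M_pos hn j
  -- the two centres differ by half a period
  have h3 : M n j * (2 * c - 1) = 0 := by
    have : 2 * (M n j * c) = M n j := by omega
    linarith
  rcases mul_eq_zero.1 h3 with h3 | h3 <;> omega

lemma vpal_ne_vpal {a : ℕ → A} {n : ℕ → ℕ} (hn : ∀ k, 2 ≤ n k) (ha : ∀ k, a k ≠ a (k + 1))
    {L j : ℕ} (hL : M n (j + 1) ≤ L) : vpal a n L j ≠ vpal a n L (j + 1) := by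
  intro h
  have h2 := two_M_le hn j
  have hp := M_pos hn j
  have h1 := vfun_sync hn ha ((grid_vfun a n (j + 1)).mono (by omega)) (by omega) h
  obtain ⟨i, hi, hd⟩ := exists_dvd_add (M_pos hn (j + 1)) ((M n (j + 1) - L + 1) / 2)
  have h3 := wd_eq_iff.1 h i (by omega)
  have hd' := (M_dvd (n := n) (show j ≤ j + 1 by omega)).trans hd
  have h4 := dvd_add h1 hd'
  rw [← add_assoc, sub_add_cancel] at h4
  rw [vfun, vfun, if_pos hd, if_pos h4] at h3
  exact ha j h3

/-! ### Which of these palindromes occur -/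

lemma tz_eq_vfun {a : ℕ → A} {n : ℕ → ℕ} {k : ℕ} {t : ℤ} (h : ¬ M n (k + 1) ∣ t) :
    tz a n t = vfun a n k t := by
  by_cases hd : M n k ∣ t
  · rw [vfun, if_pos hd, tz_eq hd h]
  · rw [vfun, if_neg hd]

lemma hfun_eq_vfun {a : ℕ → A} {n : ℕ → ℕ} {k : ℕ} {t : ℤ} (h1 : -M n (k + 1) < t)
    (h2 : t < M n (k + 1)) : hfun a n (a k) t = vfun a n k t := by
  by_cases h0 : t = 0
  · simp [hfun, vfun, h0]
  · rw [hfun, if_neg h0, tz_eq_vfun fun hd => h0 (eq_zero_of_small hd h1 h2)]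

/-- Around the position `M n j`, which carries the letter `a j`, the Toeplitz sequence looks
as it does around the origin. -/
lemma tz_center {a : ℕ → A} {n : ℕ → ℕ} (hn : ∀ k, 2 ≤ n k) {j k : ℕ} (hj : k ≤ j) {t : ℤ}
    (h1 : -M n k < t) (h2 : t < M n k) : tz a n (M n j + t) = hfun a n (a j) t := by
  by_cases h0 : t = 0
  · simp [hfun, h0, tz_eq (dvd_refl _) (not_dvd_M hn j)]
  · rw [hfun, if_neg h0]
    exact tz_shift hn (fun hd => h0 (eq_zero_of_small hd h1 h2)) (by simpa using M_dvd hj)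

lemma wd_mem_lang {a : ℕ → A} {n : ℕ → ℕ} (hn : ∀ k, 2 ≤ n k) {f : ℤ → A} {s t : ℤ} {L : ℕ}
    (ht : 1 ≤ t) (h : ∀ i : ℕ, i < L → f (s + i) = tz a n (t + i)) :
    wd f s L ∈ ToeplitzLang a n := by
  rw [mem_lang_iff hn]
  exact ⟨t, ht, by rw [wd_length]; exact wd_eq_iff.2 h⟩

lemma hpal_mem {a : ℕ → A} {n : ℕ → ℕ} (hn : ∀ k, 2 ≤ n k) {L k : ℕ} (hL : L % 2 = 1)
    (hLk : L < M n (k + 1)) {x : A} (hx : x ∈ Ak a (k + 1)) : hpal a n L x ∈ ToeplitzLang a n := by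
  obtain ⟨j, hj, rfl⟩ := hx
  have h1 := M_le hn hj
  refine wd_mem_lang hn (t := M n j + -((L : ℤ) - 1) / 2) (by omega) fun i hi => ?_
  rw [add_assoc, tz_center hn hj (by omega) (by omega)]

lemma hpal_mem' {a : ℕ → A} {n : ℕ → ℕ} (hn : ∀ k, 2 ≤ n k) {L k : ℕ} (hL : L % 2 = 1)
    (hLk : L < M n (k + 1)) (h : n k % 2 = 0 ∨ L + M n k < M n (k + 1)) :
    hpal a n L (a k) ∈ ToeplitzLang a n := by
  have hp := M_pos hn k
  obtain ⟨e, he⟩ : ∃ e : ℤ, e = (n k : ℤ) / 2 := ⟨_, rfl⟩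
  -- the centre `M n k * e` is the multiple of `M n k` closest to the middle of `p k`
  have hb : (L : ℤ) < 2 * (M n k * e) ∧ 2 * (M n k * e) ≤ M n (k + 1) := by
    rw [M_succ] at *
    rcases Nat.mod_two_eq_zero_or_one (n k) with h0 | h0
    · have h2 : (n k : ℤ) = 2 * e := by omega
      rw [h2] at hLk ⊢
      constructor <;> linarith
    · have h2 : (n k : ℤ) = 2 * e + 1 := by omega
      rw [h2] at h ⊢
      rcases h with h | h
      · omega
      · constructor <;> linarith
  refine wd_mem_lang hn (t := M n k * e + -((L : ℤ) - 1) / 2) (by omega) fun i hi => ?_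
  rw [hfun_eq_vfun (by omega) (by omega), tz_eq_vfun (k := k)]
  · exact (vfun_shift hn ⟨e, by ring⟩).symm
  · intro hd
    have := eq_zero_of_small hd (by omega) (by omega)
    omega

lemma vpal_mem {a : ℕ → A} {n : ℕ → ℕ} (hn : ∀ k, 2 ≤ n k) {L k : ℕ}
    (hL : (L + M n k) % 2 = 1) (hLk : L + M n k + 1 ≤ 2 * M n (k + 1)) (hx : a k ∈ Ak a (k + 1)) :
    vpal a n L k ∈ ToeplitzLang a n := by
  obtain ⟨j, hj, hx⟩ := hx
  have h1 := M_le hn hj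
  have hp := M_pos hn k
  refine wd_mem_lang hn (t := M n j + (M n k - L + 1) / 2) (by omega) fun i hi => ?_
  rw [add_assoc, tz_center hn hj (by omega) (by omega), hx, hfun_eq_vfun (by omega) (by omega)]

lemma vpal_mem' {a : ℕ → A} {n : ℕ → ℕ} (hn : ∀ k, 2 ≤ n k) {L k : ℕ}
    (hL : (L + M n k) % 2 = 1) (hLk : L < M n (k + 1))
    (h : n k % 2 = 1 ∨ L + M n k < M n (k + 1)) : vpal a n L k ∈ ToeplitzLang a n := by
  have hp := M_pos hn k
  obtain ⟨e, he⟩ : ∃ e : ℤ, e = ((n k : ℤ) - 1) / 2 := ⟨_, rfl⟩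
  -- `M n k * e + M n k / 2` is the centre of a copy of `p (k-1)` closest to the middle of `p k`
  have hb : (L : ℤ) < 2 * (M n k * e) + M n k ∧ 2 * (M n k * e) + M n k ≤ M n (k + 1) := by
    rw [M_succ] at *
    rcases Nat.mod_two_eq_zero_or_one (n k) with h0 | h0
    · have h2 : (n k : ℤ) = 2 * e + 2 := by omega
      rw [h2] at h ⊢
      rcases h with h | h
      · omega
      · constructor <;> linarith
    · have h2 : (n k : ℤ) = 2 * e + 1 := by omega
      rw [h2] at hLk ⊢
      constructor <;> linarith
  refine wd_mem_lang hn (t := M n k * e + (M n k - L + 1) / 2) (by omega) fun i hi => ?_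
  rw [tz_eq_vfun (k := k)]
  · exact (vfun_shift hn ⟨e, by ring⟩).symm
  · intro hd
    have := eq_zero_of_small hd (by omega) (by omega)
    omega

/-! ### Classification of the palindromes -/

/-- A window avoiding the multiples of `M n (k+1)` lies inside a copy of `p k`. If its centre
`M n k * e / 2` cannot be the centre of `p k`, it is at distance at least `M n k / 2` from it. -/
lemma gap {n : ℕ → ℕ} (hn : ∀ k, 2 ≤ n k) {k L : ℕ} (hL : 1 ≤ L) {t e : ℤ}
    (he : 2 * t + L - 1 = M n k * e) (hen : (e + n k) % 2 = 1)
    (hw : ∀ i : ℕ, i < L → ¬ M n (k + 1) ∣ t + i) : L + M n k < M n (k + 1) := by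
  have hp := M_pos hn k
  have hp1 := M_pos hn (k + 1)
  obtain ⟨ρ, hρ⟩ : ∃ ρ, ρ = t % M n (k + 1) := ⟨_, rfl⟩
  obtain ⟨j, hj⟩ : ∃ j, j = t / M n (k + 1) := ⟨_, rfl⟩
  have ht : t = M n (k + 1) * j + ρ := by rw [hρ, hj, Int.mul_ediv_add_emod]
  have h0 : 0 ≤ ρ := hρ ▸ Int.emod_nonneg _ hp1.ne'
  have h1 : ρ < M n (k + 1) := hρ ▸ Int.emod_lt_of_pos _ hp1
  have h2 : ρ ≠ 0 := fun h => hw 0 (by omega) ⟨j, by rw [ht, h]; simp⟩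
  have h3 : ρ + L - 1 < M n (k + 1) := by
    by_contra hlt
    refine hw (M n (k + 1) - ρ).toNat (by omega) ⟨j + 1, ?_⟩
    rw [Int.toNat_of_nonneg (by omega), ht]
    ring
  obtain ⟨g, hg⟩ : ∃ g, g = e - 2 * (n k * j) := ⟨_, rfl⟩
  have h4 : 2 * ρ + L - 1 = M n k * g := by
    rw [M_succ] at ht
    rw [hg, mul_sub, ← he, ht]
    ring
  rw [M_succ] at *
  rcases lt_trichotomy g (n k) with h5 | h5 | h5
  · have : M n k * g ≤ M n k * (n k - 1) := by gcongr; omega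
    linarith [show 1 ≤ ρ by omega]
  · omega
  · have : M n k * (n k + 1) ≤ M n k * g := by gcongr; omega
    linarith [show 1 ≤ ρ by omega]

/-- The palindromes of length `L`, for `M n k ≤ L < M n (k+1)`, whose centre is a symmetry centre of
the grid of multiples of `M n k`. -/
lemma classify_aligned {a : ℕ → A} {n : ℕ → ℕ} (hn : ∀ k, 2 ≤ n k) {k L : ℕ} (hL1 : M n k ≤ L)
    (hL2 : L < M n (k + 1)) {t : ℤ} (ht : 1 ≤ t)
    (hpal' : ∀ s : ℤ, t ≤ s → s < t + L → tz a n (2 * t + L - 1 - s) = tz a n s)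
    (hσ : M n k ∣ 2 * t + L - 1) :
    (L % 2 = 1 ∧ ∃ x, wd (tz a n) t L = hpal a n L x ∧
      (x ∈ Ak a (k + 1) ∨ x = a k ∧ (n k % 2 = 0 ∨ L + M n k < M n (k + 1)))) ∨
    ((L + M n k) % 2 = 1 ∧ wd (tz a n) t L = vpal a n L k ∧
      (a k ∈ Ak a (k + 1) ∨ n k % 2 = 1 ∨ L + M n k < M n (k + 1))) := by
  have hp := M_pos hn k
  obtain ⟨e, he⟩ := hσ
  -- of two distinct mirror-image multiples of `M n k`, one is not a multiple of `M n (k+1)`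
  have key : ∀ s : ℤ, t ≤ s → s < t + L → M n k ∣ s → 2 * s ≠ 2 * t + L - 1 → tz a n s = a k := by
    intro s h1 h2 hd hne
    by_cases hd1 : M n (k + 1) ∣ s
    · rw [← hpal' s h1 h2]
      refine tz_eq (by rw [he]; exact dvd_sub (dvd_mul_right _ _) hd) fun hd2 => ?_
      have := eq_zero_of_small (dvd_sub hd1 hd2) (by omega) (by omega)
      omega
    · exact tz_eq hd hd1
  have key1 : ∀ s : ℤ, t ≤ s → s < t + L → M n (k + 1) ∣ s → 2 * s ≠ 2 * t + L - 1 →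
      a k ∈ Ak a (k + 1) := by
    intro s h1 h2 hd hne
    rw [← key s h1 h2 ((M_dvd (by omega)).trans hd) hne]
    exact tz_mem hn (by omega) hd
  rcases Int.emod_two_eq_zero_or_one e with h0 | h0
  · left
    obtain ⟨f, rfl⟩ : ∃ f, e = 2 * f := ⟨e / 2, by omega⟩
    have he' : 2 * t + L - 1 = 2 * (M n k * f) := by rw [he]; ring
    refine ⟨by omega, tz a n (M n k * f), ?_, ?_⟩
    · rw [hpal, wd_eq_iff]
      intro i hi
      rw [show t + (i : ℤ) = M n k * f + (-((L : ℤ) - 1) / 2 + i) by omega]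
      by_cases hz : -((L : ℤ) - 1) / 2 + i = 0
      · rw [hz]; simp [hfun]
      · have h1 : tz a n (M n k * f + (-((L : ℤ) - 1) / 2 + i)) =
            vfun a n k (M n k * f + (-((L : ℤ) - 1) / 2 + i)) := by
          rw [vfun]
          split_ifs with hd
          · exact key _ (by omega) (by omega) hd (by omega)
          · rfl
        rw [h1, vfun_shift hn (t := -((L : ℤ) - 1) / 2 + i) ⟨f, by ring⟩,
          ← hfun_eq_vfun (by omega) (by omega), hfun, hfun, if_neg hz, if_neg hz]
    · by_cases hd : M n (k + 1) ∣ M n k * f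
      · exact Or.inl (tz_mem hn (by omega) hd)
      · rw [tz_eq (dvd_mul_right _ _) hd]
        by_cases hA : a k ∈ Ak a (k + 1)
        · exact Or.inl hA
        · refine Or.inr ⟨rfl, ?_⟩
          rcases Nat.mod_two_eq_zero_or_one (n k) with hn0 | hn1
          · exact Or.inl hn0
          · refine Or.inr (gap hn (by omega) he (by omega) fun i hi hdi => ?_)
            by_cases hc : t + i = M n k * f
            · exact hd (hc ▸ hdi)
            · exact hA (key1 _ (by omega) (by omega) hdi (by omega))
  · right
    obtain ⟨f, rfl⟩ : ∃ f, e = 2 * f + 1 := ⟨e / 2, by omega⟩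
    have he' : 2 * t + L - 1 = 2 * (M n k * f) + M n k := by rw [he]; ring
    have hne : ∀ s : ℤ, M n k ∣ s → 2 * s ≠ 2 * t + L - 1 := by
      rintro s ⟨g, rfl⟩ h
      have h1 : M n k * (2 * g - 2 * f - 1) = 0 := by linarith
      rcases mul_eq_zero.1 h1 with h1 | h1 <;> omega
    refine ⟨by omega, ?_, ?_⟩
    · rw [vpal, wd_eq_iff]
      intro i hi
      rw [← vfun_shift hn (t' := t + i) ⟨f, by omega⟩, vfun]
      split_ifs with hd
      · exact key _ (by omega) (by omega) hd (hne _ hd)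
      · rfl
    · by_cases hA : a k ∈ Ak a (k + 1)
      · exact Or.inl hA
      · refine Or.inr ?_
        rcases Nat.mod_two_eq_zero_or_one (n k) with hn0 | hn1
        · refine Or.inr (gap hn (by omega) he (by omega) fun i hi hdi => ?_)
          exact hA (key1 _ (by omega) (by omega) hdi (hne _ ((M_dvd (by omega)).trans hdi)))
        · exact Or.inl hn1

/-- The remaining palindromes: by `sync` they are windows of `p k a_k p k`, and have period `M n k`. -/
lemma classify_unaligned {a : ℕ → A} {n : ℕ → ℕ} (hn : ∀ k, 2 ≤ n k) (ha : ∀ k, a k ≠ a (k + 1))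
    {k L : ℕ} (hL1 : M n (k + 1) ≤ L) {t : ℤ} (ht : 1 ≤ t)
    (hpal' : ∀ s : ℤ, t ≤ s → s < t + L → tz a n (2 * t + L - 1 - s) = tz a n s)
    (hσ : ¬ M n (k + 1) ∣ 2 * t + L - 1) :
    (L % 2 = 1 ∧ wd (tz a n) t L = hpal a n L (a k) ∧ a k ∈ Ak a (k + 2)) ∨
    ((L + M n k) % 2 = 1 ∧ wd (tz a n) t L = vpal a n L k ∧
      a k ∈ Ak a (k + 1) ∧ L + M n k + 1 ≤ 2 * M n (k + 1)) := by
  have hp := M_pos hn k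
  have hp1 := M_pos hn (k + 1)
  obtain ⟨⟨e, he⟩, hole⟩ := sync hn ha k (grid_tz a n (k + 1)) (grid_tz a n (k + 1)) (s := t)
    (s' := -(t + L - 1)) hL1 (fun i hi => by
      rw [← hpal' (t + i) (by omega) (by omega), ← tz_neg]
      congr 1
      ring) (by rwa [show t - -(t + (L : ℤ) - 1) = 2 * t + L - 1 by ring])
  rw [show t - -(t + (L : ℤ) - 1) = 2 * t + L - 1 by ring] at he
  have hole' : ∀ s : ℤ, t ≤ s → s < t + L → M n (k + 1) ∣ s → tz a n s = a k := by
    intro s h1 h2 hd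
    have := hole (s - t).toNat (by omega)
    rw [Int.toNat_of_nonneg (by omega), add_sub_cancel] at this
    exact this hd
  have hole2 : ∀ s : ℤ, t ≤ s → s < t + L → M n (k + 1) ∣ s → M n (k + 1 + 1) ∣ s := by
    intro s h1 h2 hd
    by_contra hd2
    exact ha k ((hole' s h1 h2 hd).symm.trans (tz_eq hd hd2))
  have hv : ∀ i : ℕ, i < L → tz a n (t + i) = vfun a n k (t + i) := by
    intro i hi
    by_cases hd : M n (k + 1) ∣ t + i
    · rw [hole' _ (by omega) (by omega) hd, vfun, if_pos ((M_dvd (by omega)).trans hd)]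
    · exact tz_eq_vfun hd
  obtain ⟨i, hi, hd⟩ := exists_dvd_add hp1 t
  obtain ⟨τ, hτ⟩ : ∃ τ, τ = t + (i : ℤ) := ⟨_, rfl⟩
  rw [← hτ] at hd
  have hd2 := hole2 τ (by omega) (by omega) hd
  have hA2 : a k ∈ Ak a (k + 2) := by
    rw [← hole' τ (by omega) (by omega) hd]
    exact tz_mem hn (by omega) hd2
  have hA1 : a k ∈ Ak a (k + 1) := by
    obtain ⟨j, hj, h⟩ := hA2
    exact ⟨j, by omega, h⟩
  -- `τ` is the only multiple of `M n (k+1)` in the window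
  have hlo : τ - M n (k + 1) < t := by
    by_contra hlt
    have h1 := hole2 (τ - M n (k + 1)) (by omega) (by omega) (dvd_sub hd (dvd_refl _))
    exact not_dvd_M hn (k + 1) ((dvd_sub_right hd2).1 h1)
  have hhi : t + L - 1 < τ + M n (k + 1) := by
    by_contra hlt
    have h1 := hole2 (τ + M n (k + 1)) (by omega) (by omega) (dvd_add hd (dvd_refl _))
    exact not_dvd_M hn (k + 1) ((dvd_add_right hd2).1 h1)
  rcases Int.emod_two_eq_zero_or_one e with h0 | h0
  · left
    obtain ⟨f, rfl⟩ : ∃ f, e = 2 * f := ⟨e / 2, by omega⟩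
    have he' : 2 * t + L - 1 = 2 * (M n k * f) := by rw [he]; ring
    refine ⟨by omega, ?_, hA2⟩
    rw [hpal, wd_eq_iff]
    intro i hi
    rw [hv i hi, hfun_eq_vfun (by omega) (by omega)]
    exact vfun_shift hn ⟨f, by omega⟩
  · right
    obtain ⟨f, rfl⟩ : ∃ f, e = 2 * f + 1 := ⟨e / 2, by omega⟩
    have he' : 2 * t + L - 1 = 2 * (M n k * f) + M n k := by rw [he]; ring
    refine ⟨by omega, ?_, hA1, ?_⟩
    · rw [vpal, wd_eq_iff]
      intro i hi
      rw [hv i hi]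
      exact vfun_shift hn ⟨f, by omega⟩
    · obtain ⟨g, hg⟩ := (M_dvd (n := n) (show k ≤ k + 1 by omega)).trans hd
      -- the centre of the window differs from `τ` by an odd multiple of `M n k / 2`
      rcases lt_or_ge f g with h | h
      · have : M n k * (f + 1) ≤ M n k * g := by gcongr; omega
        linarith
      · have : M n k * g ≤ M n k * f := by gcongr
        linarith

/-! ### Counting -/

lemma Ak_eq_insert (a : ℕ → A) (k : ℕ) : Ak a k = insert (a k) (Ak a (k + 1)) := by
  ext x
  constructor
  · rintro ⟨j, hj, rfl⟩
    rcases hj.eq_or_lt with rfl | h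
    · exact Or.inl rfl
    · exact Or.inr ⟨j, h, rfl⟩
  · rintro (rfl | ⟨j, hj, rfl⟩)
    · exact ⟨k, le_rfl, rfl⟩
    · exact ⟨j, by omega, rfl⟩

/-- The palindromes of length `L` for `M n k ≤ L < M n (k+1)`. -/
lemma palSet_eq {a : ℕ → A} {n : ℕ → ℕ} (hn : ∀ k, 2 ≤ n k) (ha : ∀ k, a k ≠ a (k + 1)) {k L : ℕ}
    (hL1 : M n k ≤ L) (hL2 : L < M n (k + 1)) :
    {u | u ∈ ToeplitzLang a n ∧ u.length = L ∧ u.reverse = u} =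
      (Set.image (hpal a n L) {x | L % 2 = 1 ∧
        (x ∈ Ak a (k + 1) ∨ x = a k ∧ (n k % 2 = 0 ∨ L + M n k < M n (k + 1)))} ∪
      {u | u = vpal a n L k ∧ (L + M n k) % 2 = 1 ∧
        (a k ∈ Ak a (k + 1) ∨ n k % 2 = 1 ∨ L + M n k < M n (k + 1))}) ∪
      {u | u = vpal a n L (k - 1) ∧ 1 ≤ k ∧ (L + M n (k - 1)) % 2 = 1 ∧ a (k - 1) ∈ Ak a k ∧
        L + M n (k - 1) + 1 ≤ 2 * M n k} := by
  have h2 := two_M_le hn k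
  have hp := M_pos hn k
  ext u
  constructor
  · rintro ⟨hu, rfl, hrev⟩
    obtain ⟨t, ht, h⟩ := (mem_lang_iff hn).1 hu
    have hpal' : ∀ s : ℤ, t ≤ s → s < t + u.length →
        tz a n (2 * t + u.length - 1 - s) = tz a n s := by
      intro s h1 h2
      rw [h, wd_reverse, wd_eq_iff] at hrev
      have := hrev (s - t).toNat (by omega)
      rw [Int.toNat_of_nonneg (by omega), add_sub_cancel] at this
      rw [← this]
      congr 1
      ring
    by_cases hσ : M n k ∣ 2 * t + u.length - 1
    · rcases classify_aligned hn hL1 hL2 ht hpal' hσ with ⟨h1, x, h2, h3⟩ | ⟨h1, h2, h3⟩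
      · exact Or.inl (Or.inl ⟨x, ⟨h1, h3⟩, (h.trans h2).symm⟩)
      · exact Or.inl (Or.inr ⟨h.trans h2, h1, h3⟩)
    · cases k with
      | zero => exact absurd (by simp [M]) hσ
      | succ k =>
        rcases classify_unaligned hn ha hL1 ht hpal' hσ with ⟨h1, h2, h3⟩ | ⟨h1, h2, h3, h4⟩
        · exact Or.inl (Or.inl ⟨a k, ⟨h1, Or.inl h3⟩, (h.trans h2).symm⟩)
        · exact Or.inr ⟨h.trans h2, by omega, h1, h3, h4⟩
  · rintro ((⟨x, ⟨h1, h3⟩, rfl⟩ | ⟨rfl, h1, h3⟩) | ⟨rfl, h0, h1, h3, h4⟩)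
    · refine ⟨?_, wd_length _ _ _, hpal_reverse h1 x⟩
      rcases h3 with h3 | ⟨rfl, h3⟩
      · exact hpal_mem hn h1 hL2 h3
      · exact hpal_mem' hn h1 hL2 h3
    · refine ⟨?_, wd_length _ _ _, vpal_reverse hn h1⟩
      rcases h3 with h3 | h3
      · exact vpal_mem hn h1 (by omega) h3
      · exact vpal_mem' hn h1 hL2 h3
    · refine ⟨?_, wd_length _ _ _, vpal_reverse hn h1⟩
      obtain ⟨j, rfl⟩ : ∃ j, k = j + 1 := ⟨k - 1, by omega⟩
      exact vpal_mem hn h1 h4 h3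

open Classical in
lemma ncard_setOf_eq_and {B : Type*} (b : B) (P : Prop) :
    {u | u = b ∧ P}.ncard = if P then 1 else 0 := by
  by_cases h : P <;> simp [h]

open Classical in
/-- The number of palindromes in terms of the positions of their centres: on a multiple of `M n k`,
on the centre of a copy of `p (k-1)`, or on the centre of a copy of `p (k-2)`. -/
lemma palCmpl_eq [Fintype A] {a : ℕ → A} {n : ℕ → ℕ} (hn : ∀ k, 2 ≤ n k)
    (ha : ∀ k, a k ≠ a (k + 1)) {k L : ℕ} (hL1 : M n k ≤ L) (hL2 : L < M n (k + 1)) :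
    (palCmpl a n L : ℤ) =
      (if L % 2 = 1 then ((Ak a k).ncard : ℤ) -
        (if a k ∉ Ak a (k + 1) ∧ n k % 2 = 1 ∧ ¬ L + M n k < M n (k + 1) then 1 else 0) else 0) +
      (if (L + M n k) % 2 = 1 ∧
        (a k ∈ Ak a (k + 1) ∨ n k % 2 = 1 ∨ L + M n k < M n (k + 1)) then 1 else 0) +
      (if 1 ≤ k ∧ (L + M n (k - 1)) % 2 = 1 ∧ a (k - 1) ∈ Ak a k ∧
        L + M n (k - 1) + 1 ≤ 2 * M n k then 1 else 0) := by
  have hfin : ∀ (b : List A) (P : Prop), {u | u = b ∧ P}.Finite := fun b P =>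
    (Set.finite_singleton b).subset fun u hu => hu.1
  rw [palCmpl, palSet_eq hn ha hL1 hL2, Set.ncard_union_eq _ ((Set.toFinite _).image _ |>.union
    (hfin _ _)) (hfin _ _), Set.ncard_union_eq _ ((Set.toFinite _).image _) (hfin _ _),
    ncard_setOf_eq_and, ncard_setOf_eq_and]
  · push_cast
    congr 2
    -- the admissible middle letters: all of `Ak a k`, except `a k` when it cannot be reached
    by_cases hL : L % 2 = 1
    · rw [Set.ncard_image_of_injective _ fun x y h => hpal_inj hL h]
      simp only [hL, true_and, if_true]
      by_cases hA : a k ∈ Ak a (k + 1)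
      · simp only [hA, not_true_eq_false, false_and, if_false, sub_zero]
        congr 2
        rw [Ak_eq_insert a k, Set.insert_eq_of_mem hA]
        ext x
        constructor
        · rintro (h | ⟨rfl, -⟩)
          exacts [h, hA]
        · exact Or.inl
      · by_cases hQ : n k % 2 = 0 ∨ L + M n k < M n (k + 1)
        · rw [if_neg (by rintro ⟨-, h1, h2⟩; rcases hQ with hQ | hQ <;> omega), sub_zero,
            Ak_eq_insert a k]
          simp only [hQ, and_true]
          congr 2
          ext x
          exact or_comm
        · rw [if_pos ⟨hA, by omega, fun h => hQ (Or.inr h)⟩, Ak_eq_insert a k,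
            Set.ncard_insert_of_notMem hA (Set.toFinite _)]
          simp [hQ]
    · simp [hL]
  · rw [Set.disjoint_left]
    rintro u ⟨x, ⟨h1, -⟩, rfl⟩ ⟨h2, h3, -⟩
    exact vpal_ne_hpal hn ha hL1 h1 h3 x h2.symm
  · rw [Set.disjoint_left]
    rintro u hu ⟨h2, h0, h3, -⟩
    obtain ⟨j, rfl⟩ : ∃ j, k = j + 1 := ⟨k - 1, by omega⟩
    have hM := M_le hn (show j ≤ j + 1 by omega)
    rcases hu with ⟨x, ⟨h1, -⟩, rfl⟩ | ⟨h1, -⟩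
    · exact vpal_ne_hpal hn ha (by simpa using hM.trans hL1) h1 h3 x h2.symm
    · exact vpal_ne_vpal hn ha hL1 (h2.symm.trans h1)

/-- Parities of the remainder `r = L % m` and of `m - r`, in terms of those of `L` and `m`. -/
lemma parity_sum (L m : ℕ) (hm : 0 < m) :
    (L % m) % 2 + (m - L % m) % 2 = L % 2 + (L + m) % 2 := by
  have h1 := Nat.mod_lt L hm
  have h2 := Nat.div_add_mod L m
  have h3 := Nat.mul_mod m (L / m) 2
  rcases Nat.mod_two_eq_zero_or_one m with h | h <;>
  rcases Nat.mod_two_eq_zero_or_one (L / m) with h' | h' <;>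
  simp [h, h'] at h3 <;> omega

/-- When `L` lies in the last of the `N` intervals of length `m`, its remainder modulo `m` has the
parity of `L + (N - 1) * m`. -/
lemma parity_last (L m N : ℕ) (hN : 0 < N) (h1 : L < m * N) (h2 : m * N ≤ L + m) :
    (L % m) % 2 = if N % 2 = 1 then L % 2 else (L + m) % 2 := by
  obtain ⟨q, rfl⟩ : ∃ q, N = q + 1 := ⟨N - 1, by omega⟩
  rw [mul_add_one] at h1 h2
  obtain ⟨r, rfl⟩ : ∃ r, L = m * q + r := ⟨L - m * q, by omega⟩
  rw [Nat.mul_add_mod, Nat.mod_eq_of_lt (by omega : r < m)]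
  have h3 := Nat.mul_mod m q 2
  rcases Nat.mod_two_eq_zero_or_one m with h | h <;>
  rcases Nat.mod_two_eq_zero_or_one q with h' | h' <;>
  simp [h, h'] at h3 <;> split_ifs <;> omega

end SimpleToeplitz

/- STATEMENT 12: the palindrome complexity of the simple Toeplitz subshift. -/
open Classical in
theorem stmt12 {A : Type*} [Fintype A] [Nonempty A]
    (a : ℕ → A) (n : ℕ → ℕ) (hn : ∀ k, 2 ≤ n k) (ha : ∀ k, a k ≠ a (k + 1))
    (hAev : 2 ≤ (Aev a).ncard) :
    (∀ L : ℕ, 1 ≤ L → L ≤ (ToeplitzBlock a n 0).length →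
      (palCmpl a n L : ℤ) = (((Ak a 0).ncard : ℤ) - 1) * ((L % 2 : ℕ) : ℤ) + 1) ∧
    (∀ k : ℕ, 1 ≤ k → ∀ L : ℕ,
      lenPrev a n k + 1 ≤ L → L ≤ (ToeplitzBlock a n k).length →
      (palCmpl a n L : ℤ) =
        (((Ak a k).ncard : ℤ) - 1) * ((L % 2 : ℕ) : ℤ)
          + (((lenPrev a n k + 1 - L % (lenPrev a n k + 1)) % 2 : ℕ) : ℤ)
          + ((L % (lenPrev a n k + 1) % 2 : ℕ) : ℤ) *
              (if L + lenPrev a n k + 1 ≤ (ToeplitzBlock a n k).length then 1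
               else if a k ∈ Ak a (k + 1) then 1 else 0)
          + (if a (k - 1) ∈ Ak a k ∧ L + lenPrev a n (k - 1) ≤ 2 * lenPrev a n k then
              ((L % (lenPrev a n (k - 1) + 1) % 2 : ℕ) : ℤ)
                + (((lenPrev a n (k - 1) + 1 - L % (lenPrev a n (k - 1) + 1)) % 2 : ℕ) : ℤ)
                - ((L % 2 : ℕ) : ℤ)
             else 0)) := by
  constructor
  · intro L hL1 hL2
    have hb := SimpleToeplitz.block_length (a := a) hn 0
    have hM : SimpleToeplitz.M n (0 + 1) = n 0 := by simp [SimpleToeplitz.M]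
    rw [SimpleToeplitz.palCmpl_eq hn ha (k := 0) (by rw [SimpleToeplitz.M_zero]; omega) (by omega),
      SimpleToeplitz.M_zero, hM]
    have h0 : ¬ (1 ≤ 0) := by omega
    simp only [h0, false_and, if_false, add_zero]
    rcases Nat.mod_two_eq_zero_or_one L with h | h
    · rw [if_neg (by omega), if_pos ⟨by omega, by omega⟩, h]
      simp
    · rw [if_pos h, if_neg (by omega : ¬ (a 0 ∉ Ak a (0 + 1) ∧ n 0 % 2 = 1 ∧ ¬ (L : ℤ) + 1 < n 0)),
        if_neg (by omega), h]
      simp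
  · intro k hk L hL1 hL2
    have hb := SimpleToeplitz.block_length (a := a) hn k
    have hm := SimpleToeplitz.lenPrev_eq (a := a) hn k
    have hm' := SimpleToeplitz.lenPrev_eq (a := a) hn (k - 1)
    have hS := SimpleToeplitz.M_succ n k
    rw [SimpleToeplitz.palCmpl_eq hn ha (k := k) (by omega) (by omega)]
    rw [← hm, ← hb] at hS
    simp only [← hm, ← hm', ← hb]
    generalize lenPrev a n k = w at *
    generalize lenPrev a n (k - 1) = q at *
    generalize (ToeplitzBlock a n k).length = p at *
    have hS' : p + 1 = (w + 1) * n k := by exact_mod_cast hS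
    have e1 := SimpleToeplitz.parity_sum L (w + 1) (by omega)
    have e2 := SimpleToeplitz.parity_sum L (q + 1) (by omega)
    have e3 := SimpleToeplitz.parity_last L (w + 1) (n k) (by have := hn k; omega) (by omega)
    rw [← hS'] at e3
    -- the last summand counts the palindromes centred at the centre of a copy of `p (k-2)`
    have c2 : (if a (k - 1) ∈ Ak a k ∧ L + q ≤ 2 * w then
        ((L % (q + 1) % 2 : ℕ) : ℤ) + (((q + 1 - L % (q + 1)) % 2 : ℕ) : ℤ) - ((L % 2 : ℕ) : ℤ)
        else 0) = if 1 ≤ k ∧ ((L : ℤ) + (q + 1)) % 2 = 1 ∧ a (k - 1) ∈ Ak a k ∧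
          (L : ℤ) + (q + 1) + 1 ≤ 2 * (w + 1) then 1 else 0 := by
      generalize L % (q + 1) % 2 = x at *
      generalize (q + 1 - L % (q + 1)) % 2 = y at *
      by_cases hA : a (k - 1) ∈ Ak a k
      · simp only [hA, true_and]
        split_ifs <;> omega
      · simp [hA]
    rw [c2]
    congr 1
    generalize ((Ak a k).ncard : ℤ) = N
    generalize L % (w + 1) % 2 = x at *
    generalize (w + 1 - L % (w + 1)) % 2 = y at *
    rcases Nat.mod_two_eq_zero_or_one L with hL | hL <;>
    by_cases hA : a k ∈ Ak a (k + 1) <;>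
    simp only [hA, hL, not_true_eq_false, not_false_eq_true, true_and, false_and, true_or, false_or,
      and_true, if_true, if_false, Nat.cast_zero, Nat.cast_one, mul_zero, mul_one] <;>
    split_ifs at e3 ⊢ <;> first | contradiction | omega
end

section
/- For every k ≥ 1 the equality a_k = a_{K(k)} holds if and only if there exists i ≥ 1 with k = m_i. -/
/-! The key fact is that, for `k ≥ 1`, `a k = a (K k)` holds exactly when `K (k-1) < K k`.
If `a k = a (K k)`, the window `k, …, K k - 1` already shows every letter of `A_k`, so
`K (k-1) < K k`. Conversely, if `K (k-1) < K k`, the window `k+1, …, K k - 1` shows every letter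
of `A_{k+1}` except possibly `a k`; by minimality of `K k` the letter missing there is `a k`, and
it appears at position `K k`.

The `m i` with `i ≥ 1` are the jump positions of the monotone unbounded function `K`, so they are
exactly the `k` with `K (k-1) < K k`. -/

open Filter

/-- The positions `k+1, …, j` show every letter of `A_{k+1}`, and `j > k`. -/
def Covers {A : Type*} (a : ℕ → A) (k j : ℕ) : Prop :=
  k < j ∧ ∀ i, k < i → ∃ l, k < l ∧ l ≤ j ∧ a l = a i

lemma Covers.mono {A : Type*} {a : ℕ → A} {k j j' : ℕ} (h : Covers a k j) (hj : j ≤ j') :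
    Covers a k j' := by
  refine ⟨h.1.trans_le hj, fun i hi => ?_⟩
  obtain ⟨l, h1, h2, h3⟩ := h.2 i hi
  exact ⟨l, h1, h2.trans hj, h3⟩

lemma exists_covers {A : Type*} [Fintype A] (a : ℕ → A) (k : ℕ) : ∃ j, Covers a k j := by
  classical
  -- `f x` is a position beyond `k` showing `x`, whenever there is one.
  have h : ∀ x : A, ∃ l, (∃ i, k < i ∧ a i = x) → k < l ∧ a l = x := by
    intro x
    by_cases hx : ∃ i, k < i ∧ a i = x
    · obtain ⟨i, hi⟩ := hx
      exact ⟨i, fun _ => hi⟩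
    · exact ⟨0, fun h => absurd h hx⟩
  choose f hf using h
  refine ⟨k + 1 + ∑ x, f x, by omega, fun i hi => ?_⟩
  obtain ⟨h1, h2⟩ := hf (a i) ⟨i, hi, rfl⟩
  have := Finset.single_le_sum (f := f) (fun x _ => Nat.zero_le _) (Finset.mem_univ (a i))
  exact ⟨f (a i), h1, by omega, h2⟩

lemma Kf_eq {A : Type*} (a : ℕ → A) (k : ℕ) : Kf a k = sInf {j | Covers a k j} := by
  unfold Kf
  congr 1
  ext j
  simp only [Set.mem_setOf_eq, Covers, and_congr_right_iff]
  intro _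
  constructor
  · intro h i hi
    have : a i ∈ Ak a (k + 1) := ⟨i, hi, rfl⟩
    rw [← h] at this
    exact this
  · intro h
    ext x
    constructor
    · rintro ⟨i, h1, -, h3⟩
      exact ⟨i, h1, h3⟩
    · rintro ⟨i, h1, rfl⟩
      exact h i h1

lemma Kf_le_iff {A : Type*} [Fintype A] (a : ℕ → A) (k j : ℕ) : Kf a k ≤ j ↔ Covers a k j := by
  rw [Kf_eq]
  exact ⟨fun h => Covers.mono (Nat.sInf_mem (exists_covers a k)) h, fun h => Nat.sInf_le h⟩

lemma covers_Kf {A : Type*} [Fintype A] (a : ℕ → A) (k : ℕ) : Covers a k (Kf a k) :=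
  (Kf_le_iff a k _).1 le_rfl

lemma Kf_monotone {A : Type*} [Fintype A] (a : ℕ → A) : Monotone (Kf a) := by
  refine monotone_nat_of_le_succ fun k => (Kf_le_iff a k _).2 ?_
  obtain ⟨h1, h2⟩ := covers_Kf a (k + 1)
  refine ⟨by omega, fun i hi => ?_⟩
  rcases eq_or_lt_of_le (Nat.succ_le_of_lt hi) with h | h
  · exact ⟨i, hi, by omega, rfl⟩
  · obtain ⟨l, h3, h4, h5⟩ := h2 i h
    exact ⟨l, by omega, h4, h5⟩

lemma eq_Kf_iff_jump {A : Type*} [Fintype A] (a : ℕ → A) (ha : ∀ k, a k ≠ a (k + 1)) (k : ℕ) :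
    a (k + 1) = a (Kf a (k + 1)) ↔ Kf a k < Kf a (k + 1) := by
  obtain ⟨hK, hcov⟩ := covers_Kf a (k + 1)
  constructor
  · intro h
    suffices Kf a k ≤ Kf a (k + 1) - 1 by omega
    refine (Kf_le_iff a k _).2 ⟨by omega, fun i hi => ?_⟩
    by_cases hik : a i = a (k + 1)
    · exact ⟨k + 1, by omega, by omega, hik.symm⟩
    · have hne : i ≠ k + 1 := fun h => hik (h ▸ rfl)
      obtain ⟨l, h1, h2, h3⟩ := hcov i (by omega)
      have hl : l ≠ Kf a (k + 1) := by
        rintro rfl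
        exact hik (h3.symm.trans h.symm)
      exact ⟨l, by omega, by omega, h3⟩
  · intro h
    obtain ⟨hk, hc⟩ := covers_Kf a k
    -- A single position cannot cover, as consecutive letters differ.
    have hk2 : k + 1 < Kf a k := by
      by_contra hcon
      obtain ⟨l, h1, h2, h3⟩ := hc (k + 1 + 1) (by omega)
      have : l = k + 1 := by omega
      exact ha (k + 1) (this ▸ h3)
    have hnot : ¬ Covers a (k + 1) (Kf a (k + 1) - 1) := by
      rw [← Kf_le_iff]
      omega
    by_contra hne
    refine hnot ⟨by omega, fun i hi => ?_⟩
    by_cases hik : a i = a (k + 1)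
    · obtain ⟨l, h1, h2, h3⟩ := hcov i hi
      have hl : l ≠ Kf a (k + 1) := by
        rintro rfl
        exact hne (hik.symm.trans h3.symm)
      exact ⟨l, h1, by omega, h3⟩
    · obtain ⟨l, h1, h2, h3⟩ := hc i (by omega)
      have hl : l ≠ k + 1 := by
        rintro rfl
        exact hik h3.symm
      exact ⟨l, by omega, by omega, h3⟩

lemma mseq_succ_mem {A : Type*} [Fintype A] (a : ℕ → A) (i : ℕ) :
    mseq a i < mseq a (i + 1) ∧ Kf a (mseq a i) < Kf a (mseq a (i + 1)) := by
  have hne : {j | mseq a i < j ∧ Kf a (mseq a i) < Kf a j}.Nonempty :=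
    ⟨Kf a (mseq a i), (covers_Kf a _).1, (covers_Kf a _).1⟩
  exact Nat.sInf_mem hne

lemma mseq_succ_le {A : Type*} (a : ℕ → A) (i j : ℕ) (h1 : mseq a i < j)
    (h2 : Kf a (mseq a i) < Kf a j) : mseq a (i + 1) ≤ j :=
  Nat.sInf_le (show j ∈ {j | mseq a i < j ∧ Kf a (mseq a i) < Kf a j} from ⟨h1, h2⟩)

lemma jump_iff_mseq {A : Type*} [Fintype A] (a : ℕ → A) (k : ℕ) :
    Kf a k < Kf a (k + 1) ↔ ∃ i, 1 ≤ i ∧ k + 1 = mseq a i := by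
  constructor
  · intro h
    have hex : ∃ i, k + 1 ≤ mseq a i :=
      ⟨k + 1, (strictMono_nat_of_lt_succ fun i => (mseq_succ_mem a i).1).le_apply⟩
    classical
    obtain ⟨i, hi, hmin⟩ : ∃ i, k + 1 ≤ mseq a i ∧ ∀ j < i, ¬ k + 1 ≤ mseq a j :=
      ⟨Nat.find hex, Nat.find_spec hex, fun _ hj => Nat.find_min hex hj⟩
    cases i with
    | zero => simp [mseq] at hi
    | succ i =>
      have hlt := hmin i (by omega)
      have hKle : Kf a (mseq a i) ≤ Kf a k := Kf_monotone a (by omega)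
      have := mseq_succ_le a i (k + 1) (by omega) (by omega)
      exact ⟨i + 1, by omega, by omega⟩
  · rintro ⟨i, hi, hk⟩
    obtain ⟨i, rfl⟩ := Nat.exists_eq_add_of_le' hi
    obtain ⟨h1, h2⟩ := mseq_succ_mem a i
    rw [← hk] at h1 h2
    by_contra hcon
    have hne : mseq a i ≠ k := by
      intro h
      rw [h] at h2
      exact hcon h2
    have := mseq_succ_le a i k (by omega) (by omega)
    omega

/-- for `k ≥ 1`, `a k = a (K k)` holds iff `k = m i` for some `i ≥ 1`. -/
theorem stmt15 {A : Type*} [Fintype A] [Nonempty A]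
    (a : ℕ → A) (n : ℕ → ℕ) (hn : ∀ k, 2 ≤ n k) (ha : ∀ k, a k ≠ a (k + 1))
    (hAev : 2 ≤ (Aev a).ncard)
    (k : ℕ) (hk : 1 ≤ k) :
    a k = a (Kf a k) ↔ ∃ i, 1 ≤ i ∧ k = mseq a i := by
  obtain ⟨k, rfl⟩ := Nat.exists_eq_add_of_le' hk
  exact (eq_Kf_iff_jump a ha k).trans (jump_iff_mseq a k)
end
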